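/- arXiv:1809.02170 — 5 statements merged into one kernel-verified Lean document; each statement's English description precedes it below -/
import Mathlib

section
/- The operators T_a satisfy the braid relations: T_a∘T_{a+1}∘T_a = T_{a+1}∘T_a∘T_{a+1} for all 2 ≤ a ≤ n−1, and T_a∘T_b = T_b∘T_a whenever 2 ≤ a, b ≤ n and |a−b| ≥ 2. -/
/-!
On a basis vector `e_i`, the operator acting on the tensor positions `a ≠ b` is
`T e_i = α(i_a, i_b) e_i + β(i_a, i_b) e_{i ∘ (a b)}`, with scalars `α`, `β` depending only on
the two entries (`TMat_mulVec_single`). Here `α(x, x)` is `q` or `-q⁻¹`, a root of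
`c² = (q - q⁻¹) c + 1`; for `x ≠ y`, one of `α(x, y)`, `α(y, x)` is `q - q⁻¹` and the other `0`;
and `β` is a symmetric sign off the diagonal and zero on it.

Expanding both sides of a braid relation on `e_i` gives combinations of the six vectors
`e_{i ∘ w}`, `w ∈ S₃`. The coefficients agree for each `w` separately, even when entries of `i`
coincide and some of these vectors are equal: three of the identities are immediate from
commutativity, and the other three (`braid_id`, `braid_left`, `braid_right`) follow by comparing
the order of the entries. For operators on disjoint pairs of positions the coefficients
commute and so do the transpositions.
-/

open scoped BigOperators

noncomputable section

/-- The 0-based position in `Fin n` corresponding to the natural number `i` (used for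
tensor positions; all actual uses are in range, `% n` only serves to produce a term). -/
def pos (n : ℕ) (hn : 0 < n) (i : ℕ) : Fin n := ⟨i % n, Nat.mod_lt _ hn⟩

/-- The matrix of the operator `φ(s)` swapping tensor positions `a` and `b`, with
super signs: basis indices `0 ≤ i < k` are even, `k ≤ i < k+l` are odd.
Columns are indexed by the source basis vector. -/
def phiMat (F : Type*) [Field F] (n k l : ℕ) (a b : Fin n) :
    Matrix (Fin n → Fin (k + l)) (Fin n → Fin (k + l)) F := fun jj ii =>
  if ii a = ii b then
    if jj = ii then (if k ≤ (ii a).val then (-1 : F) else 1) else 0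
  else
    if jj = ii ∘ (Equiv.swap a b) then
      (if k ≤ (ii a).val ∧ k ≤ (ii b).val then (-1 : F) else 1)
    else 0

/-- The matrix of the operator `T` acting on tensor positions `a`, `b`. -/
def TMat (F : Type*) [Field F] (q : F) (n k l : ℕ) (a b : Fin n) :
    Matrix (Fin n → Fin (k + l)) (Fin n → Fin (k + l)) F := fun jj ii =>
  if (ii a).val < (ii b).val then
    (q - q⁻¹) * (if jj = ii then 1 else 0) + phiMat F n k l a b jj ii
  else if ii a = ii b then
    ((q - q⁻¹) / 2) * (if jj = ii then 1 else 0) + ((q + q⁻¹) / 2) * phiMat F n k l a b jj ii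
  else phiMat F n k l a b jj ii

/-- The diagonal matrix of the operator `Ω` at tensor position `p`:
`Ω(v_i) = Q_{c(i_p)} v_i` where `col` is the (0-based) color function. -/
def OmMat (F : Type*) [Field F] {m : ℕ} (Q : Fin m → F) (n k l : ℕ)
    (col : Fin (k + l) → Fin m) (p : Fin n) :
    Matrix (Fin n → Fin (k + l)) (Fin n → Fin (k + l)) F := fun jj ii =>
  if jj = ii then Q (col (ii p)) else 0

/-- The matrix of the operator `S` acting on tensor positions `a`, `b`. -/
def SaMat (F : Type*) [Field F] (q : F) {m : ℕ} (n k l : ℕ) (col : Fin (k + l) → Fin m)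
    (a b : Fin n) : Matrix (Fin n → Fin (k + l)) (Fin n → Fin (k + l)) F := fun jj ii =>
  if col (ii a) = col (ii b) then TMat F q n k l a b jj ii else phiMat F n k l a b jj ii

/-- The matrix of the operator `T_1 = T_2⁻¹ ⋯ T_n⁻¹ S_n ⋯ S_2 Ω_1`, where
`T_a⁻¹ = T_a - (q - q⁻¹)·1`. -/
def T1Mat (F : Type*) [Field F] (q : F) {m : ℕ} (Q : Fin m → F) (n k l : ℕ) (hn : 0 < n)
    (col : Fin (k + l) → Fin m) : Matrix (Fin n → Fin (k + l)) (Fin n → Fin (k + l)) F :=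
  ((List.range (n - 1)).map fun i =>
      TMat F q n k l (pos n hn i) (pos n hn (i + 1)) -
        (q - q⁻¹) • (1 : Matrix (Fin n → Fin (k + l)) (Fin n → Fin (k + l)) F)).prod *
    ((List.range (n - 1)).map fun i =>
        SaMat F q n k l col (pos n hn i) (pos n hn (i + 1))).reverse.prod *
    OmMat F Q n k l col (pos n hn 0)

/-- `z_i = x_i` for `1 ≤ i ≤ k` and `z_{k+j} = -y_j` for `1 ≤ j ≤ l`. -/
def zfun {F : Type*} [Field F] {k l : ℕ} (x : Fin k → F) (y : Fin l → F) (a : Fin (k + l)) : F :=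
  if h : a.val < k then x ⟨a.val, h⟩ else -y ⟨a.val - k, by have := a.isLt; omega⟩

/-- The diagonal matrix of the operator `D : v_i ↦ z_{i_1} ⋯ z_{i_n} v_i`. -/
def DMat (F : Type*) [Field F] {k l : ℕ} (z : Fin (k + l) → F) (n : ℕ) :
    Matrix (Fin n → Fin (k + l)) (Fin n → Fin (k + l)) F := fun jj ii =>
  if jj = ii then ∏ t : Fin n, z (ii t) else 0

/-- `col` is the coloring of basis indices determined by the sizes `ks`, `ls`:
a (0-based) index `i < k` has color `b` iff `ks 0 + ⋯ + ks (b-1) ≤ i < ks 0 + ⋯ + ks b`,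
and similarly for indices `≥ k` using `ls`. -/
def colSpec (m k l : ℕ) (ks ls : Fin m → ℕ) (col : Fin (k + l) → Fin m) : Prop :=
  ∀ i : Fin (k + l),
    if i.val < k then
      (∑ j ∈ Finset.univ.filter (fun j => j < col i), ks j) ≤ i.val ∧
        i.val < ∑ j ∈ Finset.univ.filter (fun j => j ≤ col i), ks j
    else
      (∑ j ∈ Finset.univ.filter (fun j => j < col i), ls j) ≤ i.val - k ∧
        i.val - k < ∑ j ∈ Finset.univ.filter (fun j => j ≤ col i), ls j

/-- Variable names for the field `K' = ℂ(q, Q_1, …, Q_m, x_1, …, x_k, y_1, …, y_l)`. -/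
abbrev SVar (m k l : ℕ) := Sum Unit (Sum (Fin m) (Sum (Fin k) (Fin l)))

/-- The field `K' = ℂ(q, Q_1, …, Q_m, x_1, …, x_k, y_1, …, y_l)` of rational functions. -/
abbrev SK (m k l : ℕ) := FractionRing (MvPolynomial (SVar m k l) ℂ)

/-- The indeterminate `q` of `K'`. -/
def vq (m k l : ℕ) : SK m k l :=
  algebraMap (MvPolynomial (SVar m k l) ℂ) (SK m k l) (MvPolynomial.X (Sum.inl ()))

/-- The indeterminates `Q_1, …, Q_m` of `K'` (0-based: `vQ i` is `Q_{i+1}`). -/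
def vQ (m k l : ℕ) (i : Fin m) : SK m k l :=
  algebraMap (MvPolynomial (SVar m k l) ℂ) (SK m k l) (MvPolynomial.X (Sum.inr (Sum.inl i)))

/-- The indeterminates `x_1, …, x_k` of `K'`. -/
def vx (m k l : ℕ) (i : Fin k) : SK m k l :=
  algebraMap (MvPolynomial (SVar m k l) ℂ) (SK m k l)
    (MvPolynomial.X (Sum.inr (Sum.inr (Sum.inl i))))

/-- The indeterminates `y_1, …, y_l` of `K'`. -/
def vy (m k l : ℕ) (j : Fin l) : SK m k l :=
  algebraMap (MvPolynomial (SVar m k l) ℂ) (SK m k l)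
    (MvPolynomial.X (Sum.inr (Sum.inr (Sum.inr j))))

/-- The diagonal coefficient of `T` on a basis vector with entries `x`, `y` at the two active
positions. -/
def diagCoeff {F : Type*} [Field F] (q : F) (k : ℕ) {N : ℕ} (x y : Fin N) : F :=
  if x.val < y.val then q - q⁻¹
  else if x = y then (if k ≤ x.val then -q⁻¹ else q) else 0

/-- The coefficient of the transposed basis vector in the image under `T` of a basis vector with
entries `x`, `y` at the two active positions; it is taken to be `0` for `x = y`, when the
transposed vector is the original one. -/
def swapCoeff (F : Type*) [Field F] (k : ℕ) {N : ℕ} (x y : Fin N) : F :=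
  if x = y then 0 else if k ≤ x.val ∧ k ≤ y.val then -1 else 1

theorem TMat_mulVec_single {F : Type*} [Field F] (h2 : (2 : F) ≠ 0) (q : F) (n k l : ℕ)
    (a b : Fin n) (i : Fin n → Fin (k + l)) :
    (TMat F q n k l a b).mulVec (Pi.single i 1) =
      diagCoeff q k (i a) (i b) • Pi.single i (1 : F) +
        swapCoeff F k (i a) (i b) • Pi.single (i ∘ Equiv.swap a b) (1 : F) := by
  ext j
  rw [Matrix.mulVec_single_one]
  simp only [Matrix.col_apply, TMat, phiMat, diagCoeff, swapCoeff, Pi.add_apply, Pi.smul_apply,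
    Pi.single_apply, smul_eq_mul]
  rcases lt_trichotomy (i a) (i b) with h | h | h
  · have h' : (i a).val < (i b).val := h
    simp [h', h.ne]
  · simp only [h, lt_irrefl, if_true, if_false, zero_mul, add_zero]
    split_ifs
    · generalize q⁻¹ = r
      field_simp
      ring
    · generalize q⁻¹ = r
      field_simp
      ring
    · simp
    · simp
  · have h' : ¬ (i a).val < (i b).val := not_lt.mpr h.le
    simp [h', h.ne']

section Coefficients

variable {F : Type*} [Field F] {q : F} (k : ℕ) {N : ℕ}

theorem swapCoeff_comm (x y : Fin N) : swapCoeff F k x y = swapCoeff F k y x := by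
  simp only [swapCoeff, eq_comm (a := x), and_comm (a := k ≤ x.val)]

theorem swapCoeff_self (x : Fin N) : swapCoeff F k x x = 0 := by simp [swapCoeff]

theorem swapCoeff_mul_self (x y : Fin N) :
    swapCoeff F k x y * swapCoeff F k x y = if x = y then 0 else 1 := by
  simp only [swapCoeff]
  split_ifs <;> ring

theorem diagCoeff_lt {x y : Fin N} (h : x < y) : diagCoeff q k x y = q - q⁻¹ := by
  have : x.val < y.val := h
  simp [diagCoeff, this]

theorem diagCoeff_gt {x y : Fin N} (h : y < x) : diagCoeff q k x y = 0 := by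
  have : ¬ x.val < y.val := not_lt.mpr h.le
  simp [diagCoeff, this, (ne_of_lt h).symm]

/-- The quadratic Hecke relation on a vector with two equal entries. -/
theorem diagCoeff_self_sq (hq : q ≠ 0) (x : Fin N) :
    diagCoeff q k x x * diagCoeff q k x x = (q - q⁻¹) * diagCoeff q k x x + 1 := by
  simp only [diagCoeff, lt_irrefl, if_true, if_false]
  split_ifs <;> field_simp <;> ring

/-- The coefficients of `e_i` agree, where `i` has entries `x`, `y`, `z` at the three active
positions. -/
theorem braid_id (hq : q ≠ 0) (x y z : Fin N) :
    diagCoeff q k x y * diagCoeff q k y z * diagCoeff q k x y +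
        swapCoeff F k x y * diagCoeff q k x z * swapCoeff F k y x =
      diagCoeff q k y z * diagCoeff q k x y * diagCoeff q k y z +
        swapCoeff F k y z * diagCoeff q k x z * swapCoeff F k z y := by
  rw [swapCoeff_comm k y x, swapCoeff_comm k z y, mul_right_comm (swapCoeff F k x y),
    mul_right_comm (swapCoeff F k y z), swapCoeff_mul_self, swapCoeff_mul_self]
  have hy := diagCoeff_self_sq (q := q) k hq y
  rcases lt_trichotomy x y with h | h | h <;> rcases lt_trichotomy y z with h' | h' | h' <;>
    rcases lt_trichotomy x z with h'' | h'' | h''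
  all_goals try (exfalso; omega)
  all_goals subst_vars
  all_goals simp only [diagCoeff_lt, diagCoeff_gt, ne_of_lt, ne_of_gt, if_true, if_false, *]
  -- The quadratic relation is needed exactly when `x = y < z` or `x < y = z`.
  all_goals first
    | ring1
    | linear_combination (q - q⁻¹) * hy
    | linear_combination -(q - q⁻¹) * hy

/-- The coefficients of `e_{i ∘ s}` agree, where `s` transposes the first two active positions. -/
theorem braid_left (x y z : Fin N) :
    swapCoeff F k x y *
        (diagCoeff q k x z * diagCoeff q k y x + diagCoeff q k x y * diagCoeff q k y z) =
      swapCoeff F k x y * (diagCoeff q k y z * diagCoeff q k x z) := by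
  rcases lt_trichotomy x y with h | h | h <;> rcases lt_trichotomy y z with h' | h' | h' <;>
    rcases lt_trichotomy x z with h'' | h'' | h''
  all_goals try (exfalso; omega)
  all_goals subst_vars
  all_goals simp only [diagCoeff_lt, diagCoeff_gt, swapCoeff_self, *]
  all_goals ring

/-- The coefficients of `e_{i ∘ t}` agree, where `t` transposes the last two active positions. -/
theorem braid_right (x y z : Fin N) :
    swapCoeff F k y z * (diagCoeff q k x y * diagCoeff q k x z) =
      swapCoeff F k y z *
        (diagCoeff q k x z * diagCoeff q k z y + diagCoeff q k x y * diagCoeff q k y z) := by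
  rcases lt_trichotomy x y with h | h | h <;> rcases lt_trichotomy y z with h' | h' | h' <;>
    rcases lt_trichotomy x z with h'' | h'' | h''
  all_goals try (exfalso; omega)
  all_goals subst_vars
  all_goals simp only [diagCoeff_lt, diagCoeff_gt, swapCoeff_self, *]
  all_goals ring

end Coefficients

theorem TMat_braid {F : Type*} [Field F] (h2 : (2 : F) ≠ 0) {q : F} (hq : q ≠ 0) (n k l : ℕ)
    {a b c : Fin n} (hab : a ≠ b) (hbc : b ≠ c) (hac : a ≠ c) :
    TMat F q n k l a b * TMat F q n k l b c * TMat F q n k l a b =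
      TMat F q n k l b c * TMat F q n k l a b * TMat F q n k l b c := by
  refine Matrix.ext_of_mulVec_single fun i => ?_
  have hsts : ((i ∘ Equiv.swap a b) ∘ Equiv.swap b c) ∘ Equiv.swap a b =
      ((i ∘ Equiv.swap b c) ∘ Equiv.swap a b) ∘ Equiv.swap b c := by
    funext t
    simp only [Function.comp_apply, Equiv.swap_apply_def]
    congr 1
    split_ifs <;> simp_all
  have hs : (i ∘ Equiv.swap a b) ∘ Equiv.swap a b = i := by
    funext t; simp
  have ht : (i ∘ Equiv.swap b c) ∘ Equiv.swap b c = i := by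
    funext t; simp
  have e1 : Equiv.swap a b c = c := Equiv.swap_apply_of_ne_of_ne hac.symm hbc.symm
  have e2 : Equiv.swap b c a = a := Equiv.swap_apply_of_ne_of_ne hab hac
  simp only [← Matrix.mulVec_mulVec, Matrix.mulVec_add, Matrix.mulVec_smul,
    TMat_mulVec_single h2, hs, ht, hsts, Function.comp_apply, e1, e2,
    Equiv.swap_apply_left, Equiv.swap_apply_right]
  -- After expansion, each side is a combination of the six vectors `e_{i ∘ w}`.
  have E := braid_id (q := q) k hq (i a) (i b) (i c)
  have S := braid_left (q := q) k (i a) (i b) (i c)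
  have T := braid_right (q := q) k (i a) (i b) (i c)
  linear_combination (norm := module)
    E • (Pi.single i (1 : F) : (Fin n → Fin (k + l)) → F) +
    S • (Pi.single (i ∘ Equiv.swap a b) (1 : F) : (Fin n → Fin (k + l)) → F) +
    T • (Pi.single (i ∘ Equiv.swap b c) (1 : F) : (Fin n → Fin (k + l)) → F)

theorem TMat_comm {F : Type*} [Field F] (h2 : (2 : F) ≠ 0) (q : F) (n k l : ℕ)
    {a b c d : Fin n} (hac : a ≠ c) (had : a ≠ d) (hbc : b ≠ c) (hbd : b ≠ d) :
    TMat F q n k l a b * TMat F q n k l c d = TMat F q n k l c d * TMat F q n k l a b := by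
  refine Matrix.ext_of_mulVec_single fun i => ?_
  have e1 : Equiv.swap a b c = c := Equiv.swap_apply_of_ne_of_ne hac.symm hbc.symm
  have e2 : Equiv.swap a b d = d := Equiv.swap_apply_of_ne_of_ne had.symm hbd.symm
  have e3 : Equiv.swap c d a = a := Equiv.swap_apply_of_ne_of_ne hac had
  have e4 : Equiv.swap c d b = b := Equiv.swap_apply_of_ne_of_ne hbc hbd
  have hst : (i ∘ Equiv.swap a b) ∘ Equiv.swap c d = (i ∘ Equiv.swap c d) ∘ Equiv.swap a b := by
    funext t
    simp only [Function.comp_apply, Equiv.swap_apply_def]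
    congr 1
    split_ifs <;> simp_all
  simp only [← Matrix.mulVec_mulVec, Matrix.mulVec_add, Matrix.mulVec_smul,
    TMat_mulVec_single h2, hst, Function.comp_apply, e1, e2, e3, e4]
  module

/-- The operators `T_a` satisfy the braid relations, and commute when the positions
are far apart (`|a - b| ≥ 2`). -/
theorem stmt2 (m n k l : ℕ) (hm : 0 < m) (hn : 0 < n) (hkl : 0 < k + l)
    (ks ls : Fin m → ℕ) (hk : ∑ j, ks j = k) (hl : ∑ j, ls j = l) :
    (∀ a : ℕ, 2 ≤ a → a ≤ n - 1 →
        TMat (SK m k l) (vq m k l) n k l (pos n hn (a - 2)) (pos n hn (a - 1)) *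
            TMat (SK m k l) (vq m k l) n k l (pos n hn (a - 1)) (pos n hn a) *
            TMat (SK m k l) (vq m k l) n k l (pos n hn (a - 2)) (pos n hn (a - 1)) =
          TMat (SK m k l) (vq m k l) n k l (pos n hn (a - 1)) (pos n hn a) *
            TMat (SK m k l) (vq m k l) n k l (pos n hn (a - 2)) (pos n hn (a - 1)) *
            TMat (SK m k l) (vq m k l) n k l (pos n hn (a - 1)) (pos n hn a)) ∧
    (∀ a b : ℕ, 2 ≤ a → a ≤ n → 2 ≤ b → b ≤ n → (a + 2 ≤ b ∨ b + 2 ≤ a) →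
        TMat (SK m k l) (vq m k l) n k l (pos n hn (a - 2)) (pos n hn (a - 1)) *
            TMat (SK m k l) (vq m k l) n k l (pos n hn (b - 2)) (pos n hn (b - 1)) =
          TMat (SK m k l) (vq m k l) n k l (pos n hn (b - 2)) (pos n hn (b - 1)) *
            TMat (SK m k l) (vq m k l) n k l (pos n hn (a - 2)) (pos n hn (a - 1))) := by
  have h2 : (2 : SK m k l) ≠ 0 := two_ne_zero
  have hq : vq m k l ≠ 0 := by
    simp only [vq, ne_eq, FaithfulSMul.algebraMap_eq_zero_iff]
    exact MvPolynomial.X_ne_zero _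
  have hpos : ∀ i j : ℕ, i < n → j < n → i ≠ j → pos n hn i ≠ pos n hn j := by
    intro i j hi hj hij h
    simp only [pos, Fin.mk.injEq, Nat.mod_eq_of_lt hi, Nat.mod_eq_of_lt hj] at h
    exact hij h
  constructor
  · intro a ha han
    refine TMat_braid h2 hq n k l ?_ ?_ ?_ <;> apply hpos <;> omega
  · intro a b ha han hb hbn hab
    refine TMat_comm h2 _ n k l ?_ ?_ ?_ ?_ <;> apply hpos <;> omega
end
end

section
/- The diagonal operator D commutes with φ(s_a), T_a and S_a for all 2 ≤ a ≤ n, and with Ω_j for all 1 ≤ j ≤ n; hence D also commutes with T_1, so D commutes with the image of the cyclotomic Hecke algebra acting on V^{⊗n}. -/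
/-!
`D` is diagonal, with eigenvalue on `v_𝐢` the product of `z` over the entries of `𝐢`. This product
is unchanged when two entries of `𝐢` are interchanged. A matrix commutes with `D` as soon as its
nonzero entries only link basis vectors with the same eigenvalue (`DMat_commute`). The matrices of
`φ(s_a)`, `T_a`, `S_a` and `Ω_j` only link `v_𝐢` to itself and to `v_{𝐢s_a}`, so they qualify, and
the matrix of `T_1` is built from these by products and by subtracting scalar matrices.
-/

open scoped BigOperators

noncomputable section

/-- A matrix commutes with `D` if its nonzero entries only link basis vectors on which `D` has
the same eigenvalue. -/
theorem DMat_commute {F : Type*} [Field F] {n k l : ℕ} (z : Fin (k + l) → F)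
    (M : Matrix (Fin n → Fin (k + l)) (Fin n → Fin (k + l)) F)
    (h : ∀ jj ii, M jj ii ≠ 0 → ∏ t, z (jj t) = ∏ t, z (ii t)) :
    Commute (DMat F z n) M := by
  have hD : DMat F z n = Matrix.diagonal fun ii => ∏ t, z (ii t) := by
    ext jj ii
    by_cases hji : jj = ii
    · subst hji; simp [DMat]
    · simp [DMat, hji]
  rw [hD]
  ext jj ii
  rw [Matrix.diagonal_mul, Matrix.mul_diagonal]
  by_cases h0 : M jj ii = 0
  · simp [h0]
  · rw [h jj ii h0, mul_comm]

/-- `φ(s)` only links `v_𝐢` to `v_𝐢` and to the vector obtained by interchanging two entries. -/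
theorem phiMat_ne_zero {F : Type*} [Field F] {n k l : ℕ} {a b : Fin n}
    {jj ii : Fin n → Fin (k + l)} (h : phiMat F n k l a b jj ii ≠ 0) :
    jj = ii ∨ jj = ii ∘ Equiv.swap a b := by
  by_contra! hc
  simp [phiMat, hc.1, hc.2] at h

theorem TMat_ne_zero {F : Type*} [Field F] {q : F} {n k l : ℕ} {a b : Fin n}
    {jj ii : Fin n → Fin (k + l)} (h : TMat F q n k l a b jj ii ≠ 0) :
    jj = ii ∨ jj = ii ∘ Equiv.swap a b := by
  by_contra! hc
  have h0 : phiMat F n k l a b jj ii = 0 := by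
    by_contra h0
    exact (phiMat_ne_zero h0).elim hc.1 hc.2
  simp [TMat, hc.1, h0] at h

theorem SaMat_ne_zero {F : Type*} [Field F] {q : F} {m n k l : ℕ} {col : Fin (k + l) → Fin m}
    {a b : Fin n} {jj ii : Fin n → Fin (k + l)} (h : SaMat F q n k l col a b jj ii ≠ 0) :
    jj = ii ∨ jj = ii ∘ Equiv.swap a b := by
  unfold SaMat at h
  split_ifs at h
  · exact TMat_ne_zero h
  · exact phiMat_ne_zero h

/-- The eigenvalue of `D` is invariant under interchanging two entries of the index sequence. -/
theorem prod_eq_of_swap {F : Type*} [Field F] {n k l : ℕ} (z : Fin (k + l) → F) {a b : Fin n}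
    {jj ii : Fin n → Fin (k + l)} (h : jj = ii ∨ jj = ii ∘ Equiv.swap a b) :
    ∏ t, z (jj t) = ∏ t, z (ii t) := by
  rcases h with rfl | rfl
  · rfl
  · exact Equiv.prod_comp (Equiv.swap a b) fun t => z (ii t)

theorem DMat_commute_phiMat {F : Type*} [Field F] {n k l : ℕ} (z : Fin (k + l) → F)
    (a b : Fin n) : Commute (DMat F z n) (phiMat F n k l a b) :=
  DMat_commute z _ fun _ _ h => prod_eq_of_swap z (phiMat_ne_zero h)

theorem DMat_commute_TMat {F : Type*} [Field F] {n k l : ℕ} (z : Fin (k + l) → F) (q : F)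
    (a b : Fin n) : Commute (DMat F z n) (TMat F q n k l a b) :=
  DMat_commute z _ fun _ _ h => prod_eq_of_swap z (TMat_ne_zero h)

theorem DMat_commute_SaMat {F : Type*} [Field F] {m n k l : ℕ} (z : Fin (k + l) → F) (q : F)
    (col : Fin (k + l) → Fin m) (a b : Fin n) :
    Commute (DMat F z n) (SaMat F q n k l col a b) :=
  DMat_commute z _ fun _ _ h => prod_eq_of_swap z (SaMat_ne_zero h)

theorem DMat_commute_OmMat {F : Type*} [Field F] {m n k l : ℕ} (z : Fin (k + l) → F)
    (Q : Fin m → F) (col : Fin (k + l) → Fin m) (p : Fin n) :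
    Commute (DMat F z n) (OmMat F Q n k l col p) := by
  refine DMat_commute z _ fun jj ii h => ?_
  have hji : jj = ii := by
    by_contra hc
    simp [OmMat, hc] at h
  rw [hji]

theorem DMat_commute_T1Mat {F : Type*} [Field F] {m n k l : ℕ} (z : Fin (k + l) → F) (q : F)
    (Q : Fin m → F) (hn : 0 < n) (col : Fin (k + l) → Fin m) :
    Commute (DMat F z n) (T1Mat F q Q n k l hn col) := by
  refine ((Commute.list_prod_right _ _ fun M hM => ?_).mul_right
    (Commute.list_prod_right _ _ fun M hM => ?_)).mul_right (DMat_commute_OmMat z Q col _)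
  · obtain ⟨i, -, rfl⟩ := List.mem_map.mp hM
    exact (DMat_commute_TMat z q _ _).sub_right ((Commute.one_right _).smul_right _)
  · obtain ⟨i, -, rfl⟩ := List.mem_map.mp (List.mem_reverse.mp hM)
    exact DMat_commute_SaMat z q col _ _

/-- The diagonal operator `D` commutes with `φ(s_a)`, `T_a`, `S_a` (`2 ≤ a ≤ n`),
with `Ω_j` (`1 ≤ j ≤ n`), and with `T_1`; hence `D` commutes with the image of the
cyclotomic Hecke algebra acting on `V^{⊗n}`. -/
theorem stmt5 (m n k l : ℕ) (hm : 0 < m) (hn : 0 < n) (hkl : 0 < k + l)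
    (ks ls : Fin m → ℕ) (hk : ∑ j, ks j = k) (hl : ∑ j, ls j = l)
    (col : Fin (k + l) → Fin m) (hcol : colSpec m k l ks ls col) :
    (∀ a : ℕ, 2 ≤ a → a ≤ n →
        DMat (SK m k l) (zfun (vx m k l) (vy m k l)) n *
              phiMat (SK m k l) n k l (pos n hn (a - 2)) (pos n hn (a - 1)) =
            phiMat (SK m k l) n k l (pos n hn (a - 2)) (pos n hn (a - 1)) *
              DMat (SK m k l) (zfun (vx m k l) (vy m k l)) n ∧
          DMat (SK m k l) (zfun (vx m k l) (vy m k l)) n *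
              TMat (SK m k l) (vq m k l) n k l (pos n hn (a - 2)) (pos n hn (a - 1)) =
            TMat (SK m k l) (vq m k l) n k l (pos n hn (a - 2)) (pos n hn (a - 1)) *
              DMat (SK m k l) (zfun (vx m k l) (vy m k l)) n ∧
          DMat (SK m k l) (zfun (vx m k l) (vy m k l)) n *
              SaMat (SK m k l) (vq m k l) n k l col (pos n hn (a - 2)) (pos n hn (a - 1)) =
            SaMat (SK m k l) (vq m k l) n k l col (pos n hn (a - 2)) (pos n hn (a - 1)) *
              DMat (SK m k l) (zfun (vx m k l) (vy m k l)) n) ∧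
    (∀ j : ℕ, 1 ≤ j → j ≤ n →
        DMat (SK m k l) (zfun (vx m k l) (vy m k l)) n *
            OmMat (SK m k l) (vQ m k l) n k l col (pos n hn (j - 1)) =
          OmMat (SK m k l) (vQ m k l) n k l col (pos n hn (j - 1)) *
            DMat (SK m k l) (zfun (vx m k l) (vy m k l)) n) ∧
    DMat (SK m k l) (zfun (vx m k l) (vy m k l)) n *
        T1Mat (SK m k l) (vq m k l) (vQ m k l) n k l hn col =
      T1Mat (SK m k l) (vq m k l) (vQ m k l) n k l hn col *
        DMat (SK m k l) (zfun (vx m k l) (vy m k l)) n := by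
  exact ⟨fun a _ _ => ⟨(DMat_commute_phiMat _ _ _).eq, (DMat_commute_TMat _ _ _ _).eq,
      (DMat_commute_SaMat _ _ _ _ _).eq⟩,
    fun j _ _ => (DMat_commute_OmMat _ _ _ _).eq, (DMat_commute_T1Mat _ _ _ _ _).eq⟩
end
end

section
/- For every integer n ≥ 1, Σ_{(α;β) ∈ C(n;k|ℓ)} q̃_{(α;β)}(x/y;q) = (q^n/(q − q^{−1})) · q_n(x/y; q^{−2}), as an identity in the field ℚ(x_1,…,x_k, y_1,…,y_ℓ, q). -/
/-!
Write `t = q⁻²`. Everything follows from the monomial expansion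
`q_a(w;t) = ∑_{|α| = a} (1 - t)^{ℓ(α)} w^α` (`qHL_eq_sum`), the `a`-th coefficient of the
generating function `∏_i (1 - t w_i z) / (1 - w_i z)`. Given it, grouping the pairs `(α; β)` by
`i = |α|` turns the left-hand side into the convolution defining `q_n(x/y;t)`: each `q̃_{(α;β)}` is
`q^n / (q - q⁻¹)` times `t^{|β|} (1 - t)^{ℓ(α)} x^α (1 - t⁻¹)^{ℓ(β)} y^β` (`qtilde_eq`).

The expansion is a partial fraction decomposition of the generating function, valid for pairwise
distinct `w_i`. It is proved by adjoining one variable at a time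
(`coeff_succ_prod_hlFactor`): multiplying by a new factor convolves geometric series, which adjusts
the coefficients at the old poles as required, and the coefficient at the new pole `w_m` is
evaluated by the decomposition of `∏_j (z - t w_j) / (z - w_j)` at `z = w_m`
(`prod_eq_partial_fractions`).
-/

open scoped BigOperators

noncomputable section

/-- The Hall–Littlewood function `q_a(w; t)`:
`q_0 = 1` and `q_a(w;t) = (1-t) Σ_i w_i^a Π_{j ≠ i} (w_i - t w_j)/(w_i - w_j)`. -/
def qHL {F : Type*} [Field F] {r : ℕ} (w : Fin r → F) (t : F) (a : ℕ) : F :=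
  if a = 0 then 1
  else (1 - t) * ∑ i : Fin r, w i ^ a *
    ∏ j ∈ Finset.univ.erase i, (w i - t * w j) / (w i - w j)

/-- The super Hall–Littlewood function
`q_a(x/y;t) = Σ_{i=0}^a t^{a-i} q_i(x;t) q_{a-i}(y;t⁻¹)`. -/
def qSHL {F : Type*} [Field F] {k l : ℕ} (x : Fin k → F) (y : Fin l → F) (t : F) (a : ℕ) : F :=
  ∑ i ∈ Finset.range (a + 1), t ^ (a - i) * qHL x t i * qHL y t⁻¹ (a - i)

/-- Variable names for the field `ℚ(x_1, …, x_k, y_1, …, y_l, t)`. -/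
abbrev QVar (k l : ℕ) := Sum (Fin k) (Sum (Fin l) Unit)

/-- The field `ℚ(x_1, …, x_k, y_1, …, y_l, t)` of rational functions. -/
abbrev QK (k l : ℕ) := FractionRing (MvPolynomial (QVar k l) ℚ)

/-- The indeterminates `x_1, …, x_k`. -/
def qkx (k l : ℕ) (i : Fin k) : QK k l :=
  algebraMap (MvPolynomial (QVar k l) ℚ) (QK k l) (MvPolynomial.X (Sum.inl i))

/-- The indeterminates `y_1, …, y_l`. -/
def qky (k l : ℕ) (j : Fin l) : QK k l :=
  algebraMap (MvPolynomial (QVar k l) ℚ) (QK k l) (MvPolynomial.X (Sum.inr (Sum.inl j)))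

/-- The last indeterminate (`t`, resp. `q`). -/
def qkt (k l : ℕ) : QK k l :=
  algebraMap (MvPolynomial (QVar k l) ℚ) (QK k l) (MvPolynomial.X (Sum.inr (Sum.inr ())))

/-- The set `C(n; k|l)` of pairs `(α; β)` of tuples of nonnegative integers with
`|α| + |β| = n`. -/
def CSet (n k l : ℕ) : Finset ((Fin k → ℕ) × (Fin l → ℕ)) :=
  ((Fintype.piFinset fun _ : Fin k => Finset.range (n + 1)) ×ˢ
      (Fintype.piFinset fun _ : Fin l => Finset.range (n + 1))).filter
    (fun p => (∑ i, p.1 i) + (∑ j, p.2 j) = n)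

/-- `ℓ(α)`, the number of nonzero entries of a tuple `α`. -/
def nzero {r : ℕ} (α : Fin r → ℕ) : ℕ := (Finset.univ.filter (fun i => α i ≠ 0)).card

/-- The function
`q̃_{(α;β)}(x/y;q) = (-1)^{|β|-ℓ(β)} q^{|α|-ℓ(α)+ℓ(β)-|β|} (q-q⁻¹)^{ℓ(α;β)-1} x^α (-y)^β`. -/
def qtilde {F : Type*} [Field F] {k l : ℕ} (x : Fin k → F) (y : Fin l → F) (q : F)
    (α : Fin k → ℕ) (β : Fin l → ℕ) : F :=
  (-1 : F) ^ ((∑ j, β j) - nzero β) *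
    q ^ ((∑ i, α i : ℤ) - (nzero α : ℤ) + (nzero β : ℤ) - (∑ j, β j : ℤ)) *
    (q - q⁻¹) ^ (nzero α + nzero β - 1) *
    (∏ i, x i ^ α i) * ∏ j, (-y j) ^ β j

/-- Partial fractions: as a function of `z`, the product `∏ j, (z - t w_j) / (z - w_j)` tends to `1`
at infinity and has simple poles at the `w_i`, with residue `(1 - t) w_i c_i` where
`c_i = ∏ j ≠ i, (w_i - t w_j) / (w_i - w_j)`. -/
lemma prod_eq_partial_fractions {F ι : Type*} [Field F] [DecidableEq ι] (w : ι → F) (t : F)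
    (hw : Function.Injective w) (s : Finset ι) :
    ∀ z : F, (∀ i ∈ s, z ≠ w i) →
      ∏ j ∈ s, (z - t * w j) / (z - w j) =
        1 + (1 - t) * ∑ i ∈ s, w i / (z - w i) *
          ∏ j ∈ s.erase i, (w i - t * w j) / (w i - w j) := by
  induction s using Finset.induction_on with
  | empty => simp
  | insert m s hm ih =>
    intro z hz
    have hzm : z - w m ≠ 0 := sub_ne_zero.2 (hz m (by simp))
    have hmi : ∀ i ∈ s, w m ≠ w i := fun i hi h => hm (hw h ▸ hi)
    rw [Finset.prod_insert hm, Finset.sum_insert hm, Finset.erase_insert hm,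
      ih z (fun i hi => hz i (by simp [hi])), ih (w m) hmi]
    have key : ∑ i ∈ s, w i / (z - w i) *
          ∏ j ∈ (insert m s).erase i, (w i - t * w j) / (w i - w j) =
        ((z - t * w m) / (z - w m)) * (∑ i ∈ s, w i / (z - w i) *
          ∏ j ∈ s.erase i, (w i - t * w j) / (w i - w j)) -
        w m / (z - w m) * ((1 - t) * ∑ i ∈ s, w i / (w m - w i) *
          ∏ j ∈ s.erase i, (w i - t * w j) / (w i - w j)) := by
      simp only [Finset.mul_sum]
      rw [← Finset.sum_sub_distrib]
      refine Finset.sum_congr rfl fun i hi => ?_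
      have hne : i ≠ m := fun h => hm (h ▸ hi)
      rw [Finset.erase_insert_of_ne hne.symm, Finset.prod_insert (by simp [hm])]
      have h1 : z - w i ≠ 0 := sub_ne_zero.2 (hz i (by simp [hi]))
      have h2 : w m - w i ≠ 0 := sub_ne_zero.2 (hmi i hi)
      have h3 : w i - w m ≠ 0 := sub_ne_zero.2 (hmi i hi).symm
      generalize ∏ j ∈ s.erase i, (w i - t * w j) / (w i - w j) = c
      rw [← neg_sub (w m) (w i)]
      field_simp
      ring
    rw [key]
    field_simp
    ring

/-- The factor `(1 - t u z) / (1 - u z) = 1 + ∑_{a ≥ 1} (1 - t) u^a z^a` of the generating function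
of the Hall–Littlewood functions. -/
def hlFactor {F : Type*} [Field F] (t u : F) : PowerSeries F :=
  PowerSeries.mk fun a => if a = 0 then 1 else (1 - t) * u ^ a

/-- The convolution of the positive-degree parts of two geometric series. -/
lemma sum_geom_mul {F : Type*} [Field F] (u v : F) (h : u - v ≠ 0) (a : ℕ) :
    ∑ b ∈ Finset.range a, u ^ (b + 1) * v ^ (a - b) =
      (u ^ (a + 1) * v - v ^ (a + 1) * u) / (u - v) := by
  rw [eq_div_iff h]
  have := (Commute.all u v).geom_sum₂_mul a
  have h2 : ∑ b ∈ Finset.range a, u ^ (b + 1) * v ^ (a - b) =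
      u * v * ∑ i ∈ Finset.range a, u ^ i * v ^ (a - 1 - i) := by
    rw [Finset.mul_sum]
    refine Finset.sum_congr rfl fun b hb => ?_
    have : a - b = a - 1 - b + 1 := by have := Finset.mem_range.1 hb; omega
    rw [this]
    ring
  rw [h2, mul_assoc, this]
  ring

lemma coeff_zero_prod_hlFactor {F ι : Type*} [Field F] (w : ι → F) (t : F) (s : Finset ι) :
    PowerSeries.coeff 0 (∏ i ∈ s, hlFactor t (w i)) = 1 := by
  rw [PowerSeries.coeff_zero_eq_constantCoeff_apply, map_prod]
  refine Finset.prod_eq_one fun i _ => ?_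
  simp [hlFactor, ← PowerSeries.coeff_zero_eq_constantCoeff_apply]

/-- The positive-degree coefficients of the generating function. Adjoining a variable `w_m` creates
a new pole, whose coefficient is supplied by `prod_eq_partial_fractions` at `z = w_m`. -/
lemma coeff_succ_prod_hlFactor {F ι : Type*} [Field F] [DecidableEq ι] (w : ι → F) (t : F)
    (hw : Function.Injective w) (s : Finset ι) :
    ∀ a : ℕ, PowerSeries.coeff (a + 1) (∏ i ∈ s, hlFactor t (w i)) =
      (1 - t) * ∑ i ∈ s, w i ^ (a + 1) *
          ∏ j ∈ s.erase i, (w i - t * w j) / (w i - w j) := by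
  induction s using Finset.induction_on with
  | empty => intro a; simp [PowerSeries.coeff_one]
  | insert m s hm ih =>
    intro a
    have hmi : ∀ i ∈ s, w m ≠ w i := fun i hi h => hm (hw h ▸ hi)
    rw [Finset.prod_insert hm, Finset.sum_insert hm, Finset.erase_insert hm,
      prod_eq_partial_fractions w t hw s (w m) hmi, PowerSeries.coeff_mul,
      Finset.Nat.sum_antidiagonal_eq_sum_range_succ_mk, Finset.sum_range_succ,
      Finset.sum_range_succ']
    have hmid : ∑ b ∈ Finset.range a, PowerSeries.coeff (b + 1) (hlFactor t (w m)) *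
          PowerSeries.coeff (a + 1 - (b + 1)) (∏ i ∈ s, hlFactor t (w i)) =
        (1 - t) * ((1 - t) * ∑ i ∈ s,
          ((w m ^ (a + 1) * w i - w i ^ (a + 1) * w m) / (w m - w i)) *
          ∏ j ∈ s.erase i, (w i - t * w j) / (w i - w j)) := by
      have hb : ∀ b ∈ Finset.range a, PowerSeries.coeff (b + 1) (hlFactor t (w m)) *
          PowerSeries.coeff (a + 1 - (b + 1)) (∏ i ∈ s, hlFactor t (w i)) =
          (1 - t) * ((1 - t) * ∑ i ∈ s, (w m ^ (b + 1) * w i ^ (a - b)) *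
          ∏ j ∈ s.erase i, (w i - t * w j) / (w i - w j)) := by
        intro b hb
        have : a + 1 - (b + 1) = (a - b - 1) + 1 := by have := Finset.mem_range.1 hb; omega
        have h' : a - b - 1 + 1 = a - b := by have := Finset.mem_range.1 hb; omega
        rw [this, ih, h']
        simp only [hlFactor, PowerSeries.coeff_mk, Nat.succ_ne_zero, if_false, Finset.mul_sum]
        refine Finset.sum_congr rfl fun i _ => ?_
        ring
      rw [Finset.sum_congr rfl hb, ← Finset.mul_sum, ← Finset.mul_sum, Finset.sum_comm]
      congr 2
      refine Finset.sum_congr rfl fun i hi => ?_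
      rw [← Finset.sum_mul, sum_geom_mul _ _ (sub_ne_zero.2 (hmi i hi))]
    rw [hmid, Nat.sub_self, coeff_zero_prod_hlFactor, Nat.sub_zero, ih]
    have key : ∑ i ∈ s, w i ^ (a + 1) *
          ∏ j ∈ (insert m s).erase i, (w i - t * w j) / (w i - w j) =
        (1 - t) * (∑ i ∈ s, ((w m ^ (a + 1) * w i - w i ^ (a + 1) * w m) / (w m - w i)) *
          ∏ j ∈ s.erase i, (w i - t * w j) / (w i - w j)) +
        (∑ i ∈ s, w i ^ (a + 1) * ∏ j ∈ s.erase i, (w i - t * w j) / (w i - w j)) -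
        w m ^ (a + 1) * ((1 - t) * ∑ i ∈ s, w i / (w m - w i) *
          ∏ j ∈ s.erase i, (w i - t * w j) / (w i - w j)) := by
      simp only [Finset.mul_sum]
      rw [← Finset.sum_add_distrib, ← Finset.sum_sub_distrib]
      refine Finset.sum_congr rfl fun i hi => ?_
      have hne : i ≠ m := fun h => hm (h ▸ hi)
      rw [Finset.erase_insert_of_ne hne.symm, Finset.prod_insert (by simp [hm])]
      have h2 : w m - w i ≠ 0 := sub_ne_zero.2 (hmi i hi)
      generalize ∏ j ∈ s.erase i, (w i - t * w j) / (w i - w j) = c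
      rw [← neg_sub (w m) (w i)]
      field_simp
      ring
    rw [key]
    simp only [hlFactor, PowerSeries.coeff_mk, Nat.succ_ne_zero, if_false, if_true]
    ring

/-- Monomial expansion of the Hall–Littlewood functions:
`q_a(w;t) = ∑_{|α| = a} (1 - t)^{ℓ(α)} w^α`. -/
lemma qHL_eq_sum {F : Type*} [Field F] {r : ℕ} (w : Fin r → F) (t : F)
    (hw : Function.Injective w) (a : ℕ) :
    qHL w t a = ∑ α ∈ Finset.piAntidiag Finset.univ a,
      (1 - t) ^ nzero α * ∏ i, w i ^ α i := by
  have h1 : qHL w t a = PowerSeries.coeff a (∏ i, hlFactor t (w i)) := by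
    cases a with
    | zero => rw [coeff_zero_prod_hlFactor]; simp [qHL]
    | succ a => rw [coeff_succ_prod_hlFactor w t hw]; simp [qHL]
  rw [h1, PowerSeries.coeff_prod]
  refine Finset.sum_bij (fun l _ => ⇑l) ?_ ?_ ?_ ?_
  · intro l hl
    simpa [Finset.mem_finsuppAntidiag] using hl
  · intro l _ l' _ h
    exact DFunLike.coe_injective h
  · intro α hα
    refine ⟨Finsupp.equivFunOnFinite.symm α, ?_, by simp⟩
    simpa [Finset.mem_finsuppAntidiag] using hα
  · intro l _
    have : (1 - t) ^ nzero (⇑l) = ∏ i, if l i = 0 then 1 else 1 - t := by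
      rw [nzero, ← Finset.prod_const, Finset.prod_filter]
      exact Finset.prod_congr rfl fun i _ => by by_cases h : l i = 0 <;> simp [h]
    rw [this, ← Finset.prod_mul_distrib]
    refine Finset.prod_congr rfl fun i _ => ?_
    by_cases h : l i = 0 <;> simp [hlFactor, h]

lemma nzero_le_sum {r : ℕ} (α : Fin r → ℕ) : nzero α ≤ ∑ i, α i := by
  rw [nzero, Finset.card_filter]
  exact Finset.sum_le_sum fun i _ => by split_ifs <;> omega

lemma nzero_pos {r : ℕ} (α : Fin r → ℕ) (h : ∑ i, α i ≠ 0) : 0 < nzero α := by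
  obtain ⟨i, hi, h⟩ := Finset.exists_ne_zero_of_sum_ne_zero h
  exact Finset.card_pos.2 ⟨i, by simpa using h⟩

lemma sum_CSet {M : Type*} [AddCommMonoid M] (n k l : ℕ)
    (f : (Fin k → ℕ) × (Fin l → ℕ) → M) :
    ∑ p ∈ CSet n k l, f p = ∑ i ∈ Finset.range (n + 1),
      ∑ α ∈ Finset.piAntidiag Finset.univ i, ∑ β ∈ Finset.piAntidiag Finset.univ (n - i),
        f (α, β) := by
  rw [← Finset.sum_fiberwise_of_maps_to (s := CSet n k l) (t := Finset.range (n + 1))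
    (g := fun p => ∑ i, p.1 i)]
  · refine Finset.sum_congr rfl fun i hi => ?_
    rw [← Finset.sum_product']
    refine Finset.sum_congr ?_ fun _ _ => rfl
    ext ⟨α, β⟩
    have hi' := Finset.mem_range.1 hi
    have hα : ∀ j, α j ≤ ∑ i, α i := fun j =>
      Finset.single_le_sum (fun _ _ => Nat.zero_le _) (Finset.mem_univ j)
    have hβ : ∀ j, β j ≤ ∑ i, β i := fun j =>
      Finset.single_le_sum (fun _ _ => Nat.zero_le _) (Finset.mem_univ j)
    simp only [CSet, Finset.mem_filter, Finset.mem_product, Fintype.mem_piFinset,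
      Finset.mem_range, Finset.mem_piAntidiag, Finset.mem_univ, implies_true, and_true]
    have eα : Finset.univ.sum α = ∑ i, α i := rfl
    have eβ : Finset.univ.sum β = ∑ i, β i := rfl
    constructor
    · rintro ⟨⟨-, h⟩, h'⟩
      omega
    · rintro ⟨h, h'⟩
      refine ⟨⟨⟨fun j => ?_, fun j => ?_⟩, ?_⟩, h⟩
      · have := hα j; omega
      · have := hβ j; omega
      · omega
  · intro p hp
    have := (Finset.mem_filter.1 hp).2
    exact Finset.mem_range.2 (by omega)

/-- The summand `q̃_{(α;β)}`, rewritten with `t = q⁻²`: since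
`1 - t = q⁻¹ (q - q⁻¹)` and `1 - t⁻¹ = -q (q - q⁻¹)`, the powers of `q` and the signs recombine. -/
lemma qtilde_eq {F : Type*} [Field F] {k l : ℕ} (x : Fin k → F) (y : Fin l → F) (q : F)
    (hq : q ≠ 0) (hq' : q - q⁻¹ ≠ 0) (α : Fin k → ℕ) (β : Fin l → ℕ)
    (h : (∑ i, α i) + ∑ j, β j ≠ 0) :
    qtilde x y q α β =
      q ^ ((∑ i, α i) + ∑ j, β j) / (q - q⁻¹) *
        ((q ^ 2)⁻¹ ^ (∑ j, β j) * ((1 - (q ^ 2)⁻¹) ^ nzero α * ∏ i, x i ^ α i) *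
          ((1 - (q ^ 2)⁻¹⁻¹) ^ nzero β * ∏ j, y j ^ β j)) := by
  have hpos : nzero α + nzero β ≠ 0 := by
    by_cases hα : ∑ i, α i = 0
    · have := nzero_pos β (by omega); omega
    · have := nzero_pos α hα; omega
  have hy : ∏ j, (-y j) ^ β j = (-1) ^ (∑ j, β j) * ∏ j, y j ^ β j := by
    rw [← Finset.prod_pow_eq_pow_sum, ← Finset.prod_mul_distrib]
    exact Finset.prod_congr rfl fun j _ => neg_pow _ _
  obtain ⟨c, hc⟩ := Nat.exists_eq_add_of_le (nzero_le_sum β)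
  have h1 : 1 - (q ^ 2)⁻¹ = q⁻¹ * (q - q⁻¹) := by field_simp
  have h2 : 1 - (q ^ 2)⁻¹⁻¹ = -(q * (q - q⁻¹)) := by field_simp; ring
  have hsign : (-1 : F) ^ c * (-1) ^ (nzero β + c) = (-1) ^ nzero β := by
    rw [pow_add, mul_left_comm, ← mul_pow]; simp
  have hd : (q - q⁻¹) ^ (nzero α + nzero β - 1) =
      (q - q⁻¹) ^ nzero α * (q - q⁻¹) ^ nzero β / (q - q⁻¹) := by
    rw [eq_div_iff hq', ← pow_succ, ← pow_add]
    congr 1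
    omega
  rw [qtilde, hy, h1, h2, hd, ← Nat.cast_sum, ← Nat.cast_sum, hc, Nat.add_sub_cancel_left,
    neg_pow (q * _) (nzero β), ← hsign]
  have hz : q ^ (((∑ i, α i : ℕ) : ℤ) - (nzero α : ℤ) + (nzero β : ℤ) -
      ((nzero β + c : ℕ) : ℤ)) = q ^ (∑ i, α i) * (q ^ nzero α)⁻¹ * (q ^ c)⁻¹ := by
    rw [← zpow_natCast, ← zpow_natCast, ← zpow_natCast, ← zpow_neg, ← zpow_neg,
      ← zpow_add₀ hq, ← zpow_add₀ hq]
    congr 1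
    push_cast
    ring
  rw [hz]
  generalize q - q⁻¹ = d at *
  simp only [mul_pow, inv_pow, pow_add]
  field_simp
  ring

/-- `Σ_{(α;β) ∈ C(n;k|l)} q̃_{(α;β)}(x/y;q) = (q^n/(q-q⁻¹)) q_n(x/y;q⁻²)` in
`ℚ(x_1, …, x_k, y_1, …, y_l, q)` (here the last variable `qkt` plays the role of `q`). -/
theorem stmt8 (n k l : ℕ) (hn : 1 ≤ n) (hkl : 0 < k + l) :
    ∑ ab ∈ CSet n k l, qtilde (qkx k l) (qky k l) (qkt k l) ab.1 ab.2 =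
      (qkt k l) ^ n / (qkt k l - (qkt k l)⁻¹) *
        qSHL (qkx k l) (qky k l) (((qkt k l) ^ 2)⁻¹) n := by
  have hinj := IsFractionRing.injective (MvPolynomial (QVar k l) ℚ) (QK k l)
  have hx : Function.Injective (qkx k l) := fun i j h =>
    Sum.inl_injective (MvPolynomial.X_injective (hinj h))
  have hy : Function.Injective (qky k l) := fun i j h =>
    Sum.inl_injective (Sum.inr_injective (MvPolynomial.X_injective (hinj h)))
  have hq : qkt k l ≠ 0 := fun h =>
    MvPolynomial.X_ne_zero (R := ℚ) (Sum.inr (Sum.inr ()) : QVar k l)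
      (hinj (h.trans (map_zero _).symm))
  have hq' : qkt k l - (qkt k l)⁻¹ ≠ 0 := by
    intro h
    have h2 : qkt k l ^ 2 = 1 := by
      field_simp at h
      linear_combination h
    rw [qkt, ← map_pow, ← map_one (algebraMap (MvPolynomial (QVar k l) ℚ) (QK k l))] at h2
    -- specialising `q` to `2` would give `4 = 1`
    have h3 := congrArg (MvPolynomial.eval fun _ => (2 : ℚ)) (hinj h2)
    norm_num at h3
  rw [sum_CSet, qSHL, Finset.mul_sum]
  refine Finset.sum_congr rfl fun i hi => ?_
  rw [qHL_eq_sum _ _ hx, qHL_eq_sum _ _ hy, Finset.mul_sum (a := (_ : QK k l) ^ (n - i)),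
    Finset.sum_mul_sum, Finset.mul_sum]
  refine Finset.sum_congr rfl fun α hα => ?_
  rw [Finset.mul_sum]
  refine Finset.sum_congr rfl fun β hβ => ?_
  have hα' : ∑ i, α i = i := (Finset.mem_piAntidiag.1 hα).1
  have hβ' : ∑ i, β i = n - i := (Finset.mem_piAntidiag.1 hβ).1
  have hi' := Finset.mem_range.1 hi
  have hs : (∑ i, α i) + ∑ j, β j = n := by omega
  rw [qtilde_eq _ _ _ hq hq' α β (by omega), hs, hβ']
end
end

section
/- There is a group homomorphism ρ from the wreath product W_{m,n} = (ℤ/mℤ)^n ⋊ S_n (with S_n acting by permuting the n coordinates of (ℤ/mℤ)^n) to the group of invertible linear operators on V̄^{⊗n} such that ρ sends the j-th standard generator t_j of (ℤ/mℤ)^n to Ω̄_j for every 1 ≤ j ≤ n, and sends the transposition (a−1, a) ∈ S_n to φ(s_a) for every 2 ≤ a ≤ n. -/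
/-!
Both families of operators are monomial in the basis `v_i`: an element `(c, σ)` of the wreath
product should act by `v_i ↦ E((c, σ), i) • v_{i ∘ σ⁻¹}`, so the theorem comes down to exhibiting
a scalar `E` satisfying the cocycle identity `E(gh, i) = E(g, h · i) E(h, i)`, with the prescribed
values on generators. The scalar is `E((c, σ), i) = D(c, i ∘ σ⁻¹) ε(σ, i)`, with two factors.

* `colorWt`: `D(c, i) = ∏ t, ς ^ ((color of i_t) * c_t)`, which is multiplicative in `c` because
  `ς ^ m = 1`, and invariant under permuting `c` and `i` simultaneously.
* `koszul`: `ε(σ, i)` is the Koszul sign, the product over unordered pairs of positions `{p, r}` of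
  `-1` whenever `i_p`, `i_r` are both odd and `σ` inverts the order of `p, r`. The cocycle identity
  (`koszul_mul`) holds pair by pair, since `σ τ` inverts `{p, r}` iff exactly one of
  "`τ` inverts `{p, r}`" and "`σ` inverts `{τ p, τ r}`" holds. An adjacent transposition inverts
  exactly one pair, so its sign is the one in `phiMat`.
-/

open scoped BigOperators

noncomputable section

/-- Variable names for the field `ℂ' = ℂ(x_1, …, x_k, y_1, …, y_l)`. -/
abbrev CVar (k l : ℕ) := Sum (Fin k) (Fin l)

/-- The field `ℂ' = ℂ(x_1, …, x_k, y_1, …, y_l)` of rational functions. -/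
abbrev CK (k l : ℕ) := FractionRing (MvPolynomial (CVar k l) ℂ)

/-- The indeterminates `x_1, …, x_k`. -/
def cx (k l : ℕ) (i : Fin k) : CK k l :=
  algebraMap (MvPolynomial (CVar k l) ℂ) (CK k l) (MvPolynomial.X (Sum.inl i))

/-- The indeterminates `y_1, …, y_l`. -/
def cy (k l : ℕ) (j : Fin l) : CK k l :=
  algebraMap (MvPolynomial (CVar k l) ℂ) (CK k l) (MvPolynomial.X (Sum.inr j))

/-- The inclusion of the complex numbers into `ℂ'`. -/
def cC (k l : ℕ) : ℂ →+* CK k l :=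
  (algebraMap (MvPolynomial (CVar k l) ℂ) (CK k l)).comp MvPolynomial.C

/-- The action of `S_n` on `(ℤ/mℤ)^n` (written multiplicatively) permuting the
coordinates. -/
def permAut (m n : ℕ) : Equiv.Perm (Fin n) →* MulAut (Fin n → Multiplicative (ZMod m)) where
  toFun σ :=
    { toFun := fun c => c ∘ σ.symm
      invFun := fun c => c ∘ σ
      left_inv := fun c => by funext t; simp
      right_inv := fun c => by funext t; simp
      map_mul' := fun c d => rfl }
  map_one' := rfl
  map_mul' := fun σ τ => rfl

/-- The wreath product `W_{m,n} = (ℤ/mℤ)^n ⋊ S_n`. -/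
abbrev Wgp (m n : ℕ) :=
  (Fin n → Multiplicative (ZMod m)) ⋊[permAut m n] Equiv.Perm (Fin n)

/-- The contribution of the pair of positions `{p, r}` to the Koszul sign of `σ` on a sequence
whose odd entries are at the positions satisfying `o`. It is symmetric in `p, r`, and equals `1`
when `p = r`. -/
def koszulPair (F : Type*) [Field F] {n : ℕ} (o : Fin n → Prop) (σ : Equiv.Perm (Fin n))
    (p r : Fin n) : F :=
  open Classical in if (o p ∧ o r) ∧ ¬(p < r ↔ σ p < σ r) then -1 else 1

lemma koszulPair_comm (F : Type*) [Field F] {n : ℕ} (o : Fin n → Prop) (σ : Equiv.Perm (Fin n))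
    (p r : Fin n) : koszulPair F o σ p r = koszulPair F o σ r p := by
  rcases eq_or_ne p r with rfl | h
  · rfl
  · have h1 : p < r ↔ ¬ r < p := by
      rw [not_lt]; exact ⟨le_of_lt, fun h' => lt_of_le_of_ne h' h⟩
    have h2 : σ p < σ r ↔ ¬ σ r < σ p := by
      rw [not_lt]; exact ⟨le_of_lt, fun h' => lt_of_le_of_ne h' (σ.injective.ne h)⟩
    have h3 : (p < r ↔ σ p < σ r) ↔ (r < p ↔ σ r < σ p) := by rw [h1, h2, not_iff_not]
    unfold koszulPair
    congr 1
    exact propext (and_congr and_comm (not_congr h3))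

/-- The Koszul sign of `σ` on a sequence whose odd entries are at the positions satisfying `o`:
`(-1)` to the number of inversions of `σ` between such positions. It is a product over `Sym2`,
so that it can be reindexed along any permutation of the positions. -/
def koszul (F : Type*) [Field F] {n : ℕ} (o : Fin n → Prop) (σ : Equiv.Perm (Fin n)) : F :=
  ∏ e : Sym2 (Fin n), Sym2.lift ⟨koszulPair F o σ, koszulPair_comm F o σ⟩ e

/-- The cocycle identity for a single pair: inversions of `σ * τ` at `{p, r}` are counted modulo
two by those of `τ` at `{p, r}` and of `σ` at `{τ p, τ r}`. -/
lemma koszulPair_mul (F : Type*) [Field F] {n : ℕ} (o : Fin n → Prop) (σ τ : Equiv.Perm (Fin n))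
    (p r : Fin n) :
    koszulPair F o (σ * τ) p r =
      koszulPair F (o ∘ τ.symm) σ (τ p) (τ r) * koszulPair F o τ p r := by
  simp only [koszulPair, Function.comp, Equiv.symm_apply_apply, Equiv.Perm.mul_apply]
  by_cases h : o p ∧ o r <;> by_cases h1 : p < r <;> by_cases h2 : τ p < τ r <;>
    by_cases h3 : σ (τ p) < σ (τ r) <;> simp [h, h1, h2, h3]

/-- The cocycle identity for Koszul signs; after applying `τ` the odd entries are at the positions
satisfying `o ∘ τ⁻¹`. -/
lemma koszul_mul (F : Type*) [Field F] {n : ℕ} (o : Fin n → Prop) (σ τ : Equiv.Perm (Fin n)) :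
    koszul F o (σ * τ) = koszul F (o ∘ τ.symm) σ * koszul F o τ := by
  unfold koszul
  rw [← (Finite.injective_iff_bijective.mp (Sym2.map.injective τ.injective)).prod_comp
      (Sym2.lift ⟨koszulPair F (o ∘ τ.symm) σ, koszulPair_comm F (o ∘ τ.symm) σ⟩),
    ← Finset.prod_mul_distrib]
  refine Finset.prod_congr rfl fun e _ => ?_
  induction e using Sym2.ind with
  | _ p r => exact koszulPair_mul F o σ τ p r

lemma koszul_one (F : Type*) [Field F] {n : ℕ} (o : Fin n → Prop) :
    koszul F o (Equiv.refl (Fin n)) = 1 := by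
  refine Finset.prod_eq_one fun e _ => ?_
  induction e using Sym2.ind with
  | _ p r => simp [koszulPair]

/-- The only inversion of an adjacent transposition `(a, b)` is the pair `{a, b}` itself. -/
lemma koszul_swap (F : Type*) [Field F] {n : ℕ} (o : Fin n → Prop) (a b : Fin n)
    (hab : a.val + 1 = b.val) [Decidable (o a ∧ o b)] :
    koszul F o (Equiv.swap a b) = if o a ∧ o b then -1 else 1 := by
  unfold koszul
  rw [Finset.prod_eq_single s(a, b)]
  · have h1 : a < b := by rw [Fin.lt_def]; omega
    simp [koszulPair, h1, h1.le]
  · intro e _ he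
    induction e using Sym2.ind with
    | _ p r =>
      have key : p < r ↔ Equiv.swap a b p < Equiv.swap a b r := by
        have he' : ¬ (p = a ∧ r = b) ∧ ¬ (p = b ∧ r = a) := by
          simpa [Sym2.eq_iff, not_or] using he
        simp only [Equiv.swap_apply_def]
        simp only [Fin.ext_iff, Fin.lt_def] at he' ⊢
        split_ifs <;> omega
      simp [koszulPair, ← key]
  · simp

/-- The matrix of the monomial operator `v_i ↦ w i • v_{i ∘ σ⁻¹}`. -/
def monoMat (F : Type*) [Field F] {n d : ℕ} (σ : Equiv.Perm (Fin n))
    (w : (Fin n → Fin d) → F) : Matrix (Fin n → Fin d) (Fin n → Fin d) F := fun jj ii =>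
  if jj = ii ∘ σ.symm then w ii else 0

lemma monoMat_mul (F : Type*) [Field F] {n d : ℕ} (σ τ : Equiv.Perm (Fin n))
    (w v : (Fin n → Fin d) → F) :
    monoMat F σ w * monoMat F τ v = monoMat F (σ * τ) (fun i => w (i ∘ τ.symm) * v i) := by
  ext jj ii
  rw [Matrix.mul_apply, Finset.sum_eq_single (ii ∘ τ.symm)]
  · have h : ii ∘ (σ * τ).symm = (ii ∘ τ.symm) ∘ σ.symm := rfl
    simp only [monoMat, h, if_true, ite_mul, zero_mul]
  · intro x _ hx
    simp [monoMat, hx]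
  · simp

/-- The scalar by which `c ∈ (ℤ/mℤ)^n` acts on a basis vector whose `t`-th entry has (0-based)
color `b t`, where `z` is an `m`-th root of unity. Colors enter the exponent 1-based, whence the
`+ 1`. -/
def colorWt (F : Type*) [Field F] {m n : ℕ} (z : F) (c : Fin n → Multiplicative (ZMod m))
    (b : Fin n → Fin m) : F :=
  ∏ t, (z ^ ((b t).val + 1)) ^ (Multiplicative.toAdd (c t)).val

lemma colorWt_mul (F : Type*) [Field F] {m n : ℕ} [NeZero m] (z : F) (hz : z ^ m = 1)
    (c d : Fin n → Multiplicative (ZMod m)) (b : Fin n → Fin m) :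
    colorWt F z (c * d) b = colorWt F z c b * colorWt F z d b := by
  unfold colorWt
  rw [← Finset.prod_mul_distrib]
  refine Finset.prod_congr rfl fun t _ => ?_
  have h : (z ^ ((b t).val + 1)) ^ m = 1 := by rw [pow_right_comm, hz, one_pow]
  rw [Pi.mul_apply, toAdd_mul, ZMod.val_add, ← pow_add, ← pow_eq_pow_mod _ h]

lemma colorWt_perm (F : Type*) [Field F] {m n : ℕ} (z : F)
    (c : Fin n → Multiplicative (ZMod m)) (b : Fin n → Fin m) (σ : Equiv.Perm (Fin n)) :
    colorWt F z (permAut m n σ c) (b ∘ σ.symm) = colorWt F z c b :=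
  Equiv.prod_comp σ.symm fun t => (z ^ ((b t).val + 1)) ^ (Multiplicative.toAdd (c t)).val

lemma colorWt_one (F : Type*) [Field F] {m n : ℕ} (z : F) (b : Fin n → Fin m) :
    colorWt F z (1 : Fin n → Multiplicative (ZMod m)) b = 1 := by
  simp [colorWt]

lemma colorWt_mulSingle (F : Type*) [Field F] {m n : ℕ} [NeZero m] (z : F) (hz : z ^ m = 1)
    (j : Fin n) (b : Fin n → Fin m) :
    colorWt F z (Pi.mulSingle j (Multiplicative.ofAdd (1 : ZMod m))) b =
      z ^ ((b j).val + 1) := by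
  unfold colorWt
  rw [Finset.prod_eq_single j]
  · have h : (z ^ ((b j).val + 1)) ^ m = 1 := by rw [pow_right_comm, hz, one_pow]
    -- For `m = 1` the representative of `1 : ZMod m` is `0`, so it has to be read modulo `m`.
    rw [Pi.mulSingle_eq_same, toAdd_ofAdd, ZMod.val_one_eq_one_mod, ← pow_eq_pow_mod _ h, pow_one]
  · intro t _ ht
    simp [Pi.mulSingle_eq_of_ne ht]
  · simp

/-- The representation of the wreath product by monomial matrices:
`(c, σ)` acts by `v_i ↦ D(c, i ∘ σ⁻¹) ε(σ, i) • v_{i ∘ σ⁻¹}`. -/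
def wreathRep (F : Type*) [Field F] {m : ℕ} [NeZero m] (n k l : ℕ) (z : F) (hz : z ^ m = 1)
    (col : Fin (k + l) → Fin m) :
    Wgp m n →* Matrix (Fin n → Fin (k + l)) (Fin n → Fin (k + l)) F where
  toFun g := monoMat F g.right fun i =>
    colorWt F z g.left (col ∘ i ∘ g.right.symm) * koszul F (fun t => k ≤ (i t).val) g.right
  map_one' := by
    ext jj ii
    simp [monoMat, colorWt_one, koszul_one, Matrix.one_apply, Equiv.Perm.one_def]
  map_mul' g h := by
    rw [monoMat_mul]
    congr 1
    funext i
    have h1 : col ∘ i ∘ (g.right * h.right).symm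
        = (col ∘ i ∘ h.right.symm) ∘ g.right.symm := rfl
    rw [SemidirectProduct.mul_left, SemidirectProduct.mul_right, koszul_mul, colorWt_mul F z hz,
      h1, colorWt_perm]
    simp only [Function.comp_def]
    ring

/-- There is a group homomorphism from `W_{m,n}` to the invertible operators on
`V̄^{⊗n}` sending `t_j` to `Ω̄_j` and the transposition `(a-1, a)` to `φ(s_a)`. -/
theorem stmt14 (m n k l : ℕ) (hm : 0 < m) (hn : 0 < n) (hkl : 0 < k + l)
    (ks ls : Fin m → ℕ) (hk : ∑ j, ks j = k) (hl : ∑ j, ls j = l)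
    (ς : ℂ) (hς : IsPrimitiveRoot ς m)
    (col : Fin (k + l) → Fin m) (hcol : colSpec m k l ks ls col) :
    ∃ ρ : Wgp m n →* (Matrix (Fin n → Fin (k + l)) (Fin n → Fin (k + l)) (CK k l))ˣ,
      (∀ j : Fin n,
          (ρ (SemidirectProduct.inl
              (Pi.mulSingle j (Multiplicative.ofAdd (1 : ZMod m))))).val =
            OmMat (CK k l) (fun b => cC k l (ς ^ (b.val + 1))) n k l col j) ∧
      ∀ a : ℕ, 2 ≤ a → a ≤ n →
        (ρ (SemidirectProduct.inr (Equiv.swap (pos n hn (a - 2)) (pos n hn (a - 1))))).val =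
          phiMat (CK k l) n k l (pos n hn (a - 2)) (pos n hn (a - 1)) := by
  have : NeZero m := ⟨hm.ne'⟩
  have hz : (cC k l ς) ^ m = 1 := by rw [← map_pow, hς.pow_eq_one, map_one]
  refine ⟨(wreathRep (CK k l) n k l (cC k l ς) hz col).toHomUnits, fun j => ?_, fun a h2 han => ?_⟩
  · rw [MonoidHom.coe_toHomUnits]
    ext jj ii
    simp [wreathRep, monoMat, OmMat, koszul_one, colorWt_mulSingle _ _ hz, Equiv.Perm.one_def]
  · rw [MonoidHom.coe_toHomUnits]
    have hab : (pos n hn (a - 2)).val + 1 = (pos n hn (a - 1)).val := by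
      simp only [pos]
      rw [Nat.mod_eq_of_lt (by omega), Nat.mod_eq_of_lt (by omega)]
      omega
    generalize pos n hn (a - 2) = p at hab ⊢
    generalize pos n hn (a - 1) = q at hab ⊢
    ext jj ii
    simp only [wreathRep, MonoidHom.coe_mk, OneHom.coe_mk, SemidirectProduct.left_inr,
      SemidirectProduct.right_inr, monoMat, colorWt_one, one_mul, Equiv.symm_swap, phiMat,
      koszul_swap (CK k l) (fun t => k ≤ (ii t).val) p q hab]
    by_cases h : ii p = ii q
    · have hs : ii ∘ Equiv.swap p q = ii := by
        funext t
        simp only [Function.comp, Equiv.swap_apply_def]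
        split_ifs with h1 h2
        · rw [h1, h]
        · rw [h2, h]
        · rfl
      simp [h, hs]
    · simp [h]
end
end

section
/- In the wreath product W_{m,n} = (ℤ/mℤ)^n ⋊ S_n (with S_n acting by permuting the n coordinates), two elements (c, σ) and (c′, σ′) are conjugate if and only if the following multisets coincide: { (length of γ, Σ_{j ∈ γ} c_j) : γ a cycle of σ } and { (length of γ′, Σ_{j ∈ γ′} c′_j) : γ′ a cycle of σ′ }, where the sums are taken in ℤ/mℤ and all cycles, including fixed points, are counted. Consequently, the number of conjugacy classes of W_{m,n} equals the number of m-tuples (λ^{(1)},…,λ^{(m)}) of partitions with |λ^{(1)}|+…+|λ^{(m)}| = n. -/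
/-!
The cycle data of `(c, σ)` is the family of pairs (size, sum of `c`) over the orbits of `σ`,
indexed by any labelling of the orbits (`cycData_eq`). Conjugation by `(d, τ)` transports the
orbits along `τ` and changes `c` by a coboundary `d - d ∘ σ'⁻¹`, which sums to zero over every
orbit; this gives invariance (`cycData_eq_of_isConj`). Conversely, equality of the data provides
a bijection of orbits preserving lengths and sums. Equality of lengths gives a `τ` conjugating
`σ` to `σ'` along this bijection (`exists_intertwiner`), and equality of sums makes `c' ∘ τ - c`
a function with zero sum over every orbit of `σ`, hence a coboundary (`exists_coboundary`).

For the count, the cycle data that occur are exactly the multisets of pairs `(ℓ, a)` with `ℓ > 0`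
and total length `n` (`isCycDatum_cycData`, `exists_cycData_eq`). Sorting the lengths by the second entry `a`, which
ranges over the `m` elements of `ℤ/mℤ`, identifies such multisets with `m`-multipartitions of `n`
(`card_isCycDatum`).
-/

open scoped BigOperators

noncomputable section

/-- The conjugacy data of an element `(c, σ)` of the wreath product: the multiset of
pairs (cycle length, sum of `c` over the cycle), taken over all cycles of `σ`,
including its fixed points. -/
def cycData (m n : ℕ) (c : Fin n → Multiplicative (ZMod m)) (σ : Equiv.Perm (Fin n)) :
    Multiset (ℕ × ZMod m) :=
  (σ.cycleFactorsFinset.val.map fun γ =>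
      (γ.support.card, ∑ j ∈ γ.support, Multiplicative.toAdd (c j))) +
    ((Finset.univ \ σ.support).val.map fun j => (1, Multiplicative.toAdd (c j)))

open Finset Function

/-! ### Cycle data computed from a labelling of the cycles -/

/-- The map `p` labels the cycles of `σ` (fixed points included) by `I`: its fibres are exactly
the cycles. -/
structure IsCycleLabel {n : ℕ} {I : Type*} (σ : Equiv.Perm (Fin n)) (p : Fin n → I) : Prop where
  surj : Surjective p
  iff_sameCycle : ∀ x y, p x = p y ↔ σ.SameCycle x y

/-- The pair (size, sum of `c`) of the fibre of `p` over `i`. -/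
def labelData {m n : ℕ} {I : Type*} [DecidableEq I] (c : Fin n → Multiplicative (ZMod m))
    (p : Fin n → I) (i : I) : ℕ × ZMod m :=
  (#{j | p j = i}, ∑ j with p j = i, Multiplicative.toAdd (c j))

theorem exists_cycleLabel {n : ℕ} (σ : Equiv.Perm (Fin n)) :
    ∃ (k : ℕ) (p : Fin n → Fin k), IsCycleLabel σ p := by
  classical
  let s := Equiv.Perm.SameCycle.setoid σ
  let e := Fintype.equivFin (Quotient s)
  refine ⟨_, fun x => e (Quotient.mk s x), e.surjective.comp Quotient.mk_surjective, fun x y => ?_⟩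
  rw [e.injective.eq_iff, Quotient.eq]
  rfl

theorem IsCycleLabel.apply_eq {n : ℕ} {I : Type*} {σ : Equiv.Perm (Fin n)} {p : Fin n → I}
    (h : IsCycleLabel σ p) (x : Fin n) : p (σ x) = p x := by
  rw [h.iff_sameCycle]
  exact (Equiv.Perm.SameCycle.refl σ x).apply_left

/-- The nontrivial cycles contribute the supports of the cycle factors and the fixed points
contribute singletons; together these are the fibres of `p`, each occurring once. -/
theorem cycData_eq {m n : ℕ} {I : Type*} [Fintype I] [DecidableEq I]
    (c : Fin n → Multiplicative (ZMod m)) {σ : Equiv.Perm (Fin n)} {p : Fin n → I}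
    (h : IsCycleLabel σ p) :
    cycData m n c σ = (univ : Finset I).val.map (labelData c p) := by
  classical
  let G : Finset (Fin n) → ℕ × ZMod m := fun s =>
    (s.card, ∑ j ∈ s, Multiplicative.toAdd (c j))
  let fib : I → Finset (Fin n) := fun i => univ.filter (p · = i)
  have hmem : ∀ x i, x ∈ fib i ↔ p x = i := fun x i => by simp [fib]
  have hfib : Injective fib := by
    intro i i' hi
    obtain ⟨x, rfl⟩ := h.surj i
    have := (hmem x (p x)).2 rfl
    rw [hi, hmem] at this
    exact this
  have hcyc : ∀ γ ∈ σ.cycleFactorsFinset, ∃ x, σ x ≠ x ∧ γ = σ.cycleOf x := by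
    intro γ hγ
    obtain ⟨x, hx⟩ := (Equiv.Perm.mem_cycleFactorsFinset_iff.1 hγ).1.nonempty_support
    refine ⟨x, ?_, Equiv.Perm.cycle_is_cycleOf hx hγ⟩
    exact Equiv.Perm.mem_support.1 (Equiv.Perm.mem_cycleFactorsFinset_support_le hγ hx)
  have hsupp : ∀ x, σ x ≠ x → (σ.cycleOf x).support = fib (p x) := by
    intro x hx
    ext y
    rw [Equiv.Perm.mem_support_cycleOf_iff' hx, hmem, eq_comm, h.iff_sameCycle]
  have hsing : ∀ x, σ x = x → ({x} : Finset (Fin n)) = fib (p x) := by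
    intro x hx
    ext y
    rw [mem_singleton, hmem, eq_comm, eq_comm (a := p y), h.iff_sameCycle]
    refine ⟨?_, fun hs => hs.eq_of_left hx⟩
    rintro rfl
    exact Equiv.Perm.SameCycle.refl _ _
  have hinj : Set.InjOn (Equiv.Perm.support (α := Fin n)) σ.cycleFactorsFinset := by
    intro γ hγ δ hδ he
    obtain ⟨x, hx⟩ := (Equiv.Perm.mem_cycleFactorsFinset_iff.1 hγ).1.nonempty_support
    rw [Equiv.Perm.cycle_is_cycleOf hx hγ]
    rw [he] at hx
    rw [← Equiv.Perm.cycle_is_cycleOf hx hδ]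
  have hdisj : Disjoint (σ.cycleFactorsFinset.image Equiv.Perm.support)
      ((univ \ σ.support).image fun x => ({x} : Finset (Fin n))) := by
    rw [Finset.disjoint_left]
    intro s hs hs'
    obtain ⟨γ, hγ, rfl⟩ := mem_image.1 hs
    obtain ⟨x, hx, hxs⟩ := mem_image.1 hs'
    have h1 : x ∈ γ.support := by rw [← hxs]; simp
    exact (mem_sdiff.1 hx).2 (Equiv.Perm.mem_cycleFactorsFinset_support_le hγ h1)
  have key : (σ.cycleFactorsFinset.image Equiv.Perm.support).disjUnion
      ((univ \ σ.support).image fun x => ({x} : Finset (Fin n))) hdisj = univ.image fib := by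
    ext s
    simp only [mem_disjUnion, mem_image, mem_univ, true_and, mem_sdiff, Equiv.Perm.mem_support,
      not_not]
    constructor
    · rintro (⟨γ, hγ, rfl⟩ | ⟨x, hx, rfl⟩)
      · obtain ⟨x, hx, rfl⟩ := hcyc γ hγ
        exact ⟨_, (hsupp x hx).symm⟩
      · exact ⟨_, (hsing x hx).symm⟩
    · rintro ⟨i, rfl⟩
      obtain ⟨x, rfl⟩ := h.surj i
      by_cases hx : σ x = x
      · exact Or.inr ⟨x, hx, hsing x hx⟩
      · exact Or.inl ⟨σ.cycleOf x, Equiv.Perm.cycleOf_mem_cycleFactorsFinset_iff.2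
          (Equiv.Perm.mem_support.2 hx), hsupp x hx⟩
  have := congrArg (fun s => s.val.map G) key
  simp only [disjUnion_val, Multiset.map_add] at this
  rw [image_val_of_injOn hinj, image_val_of_injOn (singleton_injective.injOn),
    image_val_of_injOn hfib.injOn, Multiset.map_map, Multiset.map_map, Multiset.map_map] at this
  rw [cycData]
  have h1 : (fun j => ((1 : ℕ), Multiplicative.toAdd (c j))) = (fun x => G x) ∘ singleton := by
    funext x
    simp [G]
  rw [h1]
  exact this

/-- Two families with the same multiset of values differ by a bijection of the index types. -/
theorem exists_equiv_of_map_univ_eq {I J α : Type*} [Fintype I] [Fintype J]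
    (f : I → α) (g : J → α)
    (h : (univ : Finset I).val.map f = (univ : Finset J).val.map g) :
    ∃ π : I ≃ J, ∀ i, g (π i) = f i := by
  classical
  have hc : ∀ a, Nonempty ({i // f i = a} ≃ {j // g j = a}) := by
    intro a
    rw [← Fintype.card_eq, Fintype.card_subtype, Fintype.card_subtype]
    have := congrArg (Multiset.count a) h
    rw [Multiset.count_map, Multiset.count_map] at this
    simp only [eq_comm (a := a)] at this
    exact this
  have E := fun a => (hc a).some
  refine ⟨(Equiv.sigmaFiberEquiv f).symm.trans
    ((Equiv.sigmaCongrRight E).trans (Equiv.sigmaFiberEquiv g)), fun i => ?_⟩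
  exact (E (f i) ⟨i, rfl⟩).2

/-! ### Invariance under conjugation -/

/-- If `(d, τ)` conjugates `(c, σ)` to `(c', σ')`, then `τ` carries the cycles of `σ` to those of
`σ'`, and `c' = d + c ∘ τ⁻¹ - d ∘ σ'⁻¹`, where the two terms in `d` have the same sum over each
cycle of `σ'`. -/
theorem cycData_eq_of_isConj {m n : ℕ} {g g' : Wgp m n} (h : IsConj g g') :
    cycData m n g.left g.right = cycData m n g'.left g'.right := by
  obtain ⟨w, hw⟩ := isConj_iff.1 h
  rw [mul_inv_eq_iff_eq_mul] at hw
  obtain ⟨d, τ⟩ := w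
  obtain ⟨c, σ⟩ := g
  obtain ⟨c', σ'⟩ := g'
  have hr : τ * σ = σ' * τ := congrArg SemidirectProduct.right hw
  have hl : d * (c ∘ τ.symm) = c' * (d ∘ σ'.symm) := congrArg SemidirectProduct.left hw
  obtain ⟨k, p, hp⟩ := exists_cycleLabel σ
  have hσ' : σ' = τ * σ * τ⁻¹ := by rw [hr]; simp
  have hp' : IsCycleLabel σ' (p ∘ τ.symm) := by
    refine ⟨hp.surj.comp τ.symm.surjective, fun x y => ?_⟩
    rw [hσ', Equiv.Perm.sameCycle_conj]
    exact hp.iff_sameCycle _ _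
  simp only
  rw [cycData_eq c hp, cycData_eq c' hp']
  refine Multiset.map_congr rfl fun i _ => ?_
  have hfib : ∀ x, p (τ.symm (σ'.symm x)) = i ↔ p (τ.symm x) = i := by
    intro x
    have := hp'.apply_eq (σ'.symm x)
    simp only [comp_apply, Equiv.apply_symm_apply] at this
    rw [this]
  refine Prod.ext ?_ ?_
  · simp only [labelData]
    exact card_equiv τ (by simp)
  · have hc' : ∀ x, Multiplicative.toAdd (c' x) = Multiplicative.toAdd (d x) +
        Multiplicative.toAdd (c (τ.symm x)) - Multiplicative.toAdd (d (σ'.symm x)) := by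
      intro x
      have := congrArg Multiplicative.toAdd (congrFun hl x)
      simp only [Pi.mul_apply, comp_apply, toAdd_mul] at this
      rw [this]; abel
    simp only [labelData, comp_apply, hc', sum_sub_distrib, sum_add_distrib]
    have h1 : ∑ x with p (τ.symm x) = i, Multiplicative.toAdd (d (σ'.symm x)) =
        ∑ x with p (τ.symm x) = i, Multiplicative.toAdd (d x) :=
      sum_equiv σ'.symm (by simp [hfib]) (by simp)
    have h2 : ∑ x with p (τ.symm x) = i, Multiplicative.toAdd (c (τ.symm x)) =
        ∑ x with p x = i, Multiplicative.toAdd (c x) :=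
      sum_equiv τ.symm (by simp) (by simp)
    rw [h1, h2]; abel

/-! ### Elements with equal cycle data are conjugate -/

theorem filter_label_eq_image {n : ℕ} {I : Type*} [DecidableEq I] {σ : Equiv.Perm (Fin n)}
    {p : Fin n → I} (h : IsCycleLabel σ p) (x : Fin n) :
    univ.filter (p · = p x) = (range (minimalPeriod σ x)).image (fun t => σ^[t] x) := by
  ext y
  simp only [mem_filter, mem_univ, true_and, mem_image, mem_range]
  rw [eq_comm, h.iff_sameCycle]
  constructor
  · intro hs
    obtain ⟨t, rfl⟩ := hs.exists_nat_pow_eq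
    have hx : x ∈ periodicPts σ :=
      mk_mem_periodicPts (orderOf_pos σ) (by
        rw [IsPeriodicPt, IsFixedPt, ← Equiv.Perm.coe_pow, pow_orderOf_eq_one]; rfl)
    refine ⟨t % minimalPeriod σ x, Nat.mod_lt _ (minimalPeriod_pos_of_mem_periodicPts hx), ?_⟩
    rw [iterate_mod_minimalPeriod_eq, Equiv.Perm.coe_pow]
  · rintro ⟨t, -, rfl⟩
    rw [← Equiv.Perm.coe_pow]
    exact (Equiv.Perm.SameCycle.refl σ x).pow_right

theorem iterate_injOn_range {n : ℕ} (σ : Equiv.Perm (Fin n)) (x : Fin n) :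
    Set.InjOn (fun t => σ^[t] x) (range (minimalPeriod σ x) : Set ℕ) := by
  rw [coe_range]
  exact iterate_injOn_Iio_minimalPeriod

theorem IsCycleLabel.card_fiber {n : ℕ} {I : Type*} [DecidableEq I] {σ : Equiv.Perm (Fin n)}
    {p : Fin n → I} (h : IsCycleLabel σ p) (x : Fin n) :
    #{y | p y = p x} = minimalPeriod σ x := by
  rw [filter_label_eq_image h, card_image_of_injOn (iterate_injOn_range σ x), card_range]

theorem IsCycleLabel.sum_fiber {n : ℕ} {I A : Type*} [DecidableEq I] [AddCommGroup A]
    {σ : Equiv.Perm (Fin n)} {p : Fin n → I} (h : IsCycleLabel σ p) (x : Fin n) (b : Fin n → A) :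
    ∑ y with p y = p x, b y = ∑ t ∈ range (minimalPeriod σ x), b (σ^[t] x) := by
  rw [filter_label_eq_image h, sum_image (iterate_injOn_range σ x)]

/-- If `b` sums to zero once around the cycle of `y`, it sums to zero along every closed walk
around it. -/
theorem sum_range_eq_zero {n : ℕ} {A : Type*} [AddCommGroup A] {σ : Equiv.Perm (Fin n)}
    {b : Fin n → A} {y : Fin n} (hb : ∑ t ∈ range (minimalPeriod σ y), b (σ^[t] y) = 0)
    {q : ℕ} (hq : σ^[q] y = y) : ∑ t ∈ range q, b (σ^[t] y) = 0 := by
  obtain ⟨s, rfl⟩ := IsPeriodicPt.minimalPeriod_dvd (f := σ) (x := y) (n := q) hq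
  clear hq
  induction s with
  | zero => simp
  | succ s ih =>
    rw [mul_add, mul_one, sum_range_add, ih, zero_add, ← hb]
    refine sum_congr rfl fun t _ => ?_
    rw [add_comm, iterate_add_apply]
    congr 2
    exact ((isPeriodicPt_minimalPeriod σ y).mul_const s)

/-- A function `b` whose sum over every cycle of `σ` vanishes is a coboundary `e - e ∘ σ⁻¹`: take
for `e j` the sum of `b` along a walk from a base point of the cycle to `j`. -/
theorem exists_coboundary {n : ℕ} {I A : Type*} [DecidableEq I] [AddCommGroup A]
    {σ : Equiv.Perm (Fin n)} {p : Fin n → I} (h : IsCycleLabel σ p) (b : Fin n → A)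
    (hb : ∀ i, ∑ y with p y = i, b y = 0) :
    ∃ e : Fin n → A, ∀ j, e (σ j) = e j + b (σ j) := by
  have hb' : ∀ x, ∑ t ∈ range (minimalPeriod σ x), b (σ^[t] x) = 0 := fun x => by
    rw [← h.sum_fiber, hb]
  let r : Fin n → Fin n := fun j => surjInv h.surj (p j)
  have hr : ∀ j, p (r j) = p j := fun j => surjInv_eq h.surj (p j)
  have hk : ∀ j, ∃ k : ℕ, σ^[k] (r j) = j := fun j => by
    obtain ⟨k, hk⟩ := ((h.iff_sameCycle _ _).1 (hr j)).exists_nat_pow_eq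
    exact ⟨k, by rwa [← Equiv.Perm.coe_pow]⟩
  choose k hk using hk
  -- `E x k` is the sum of `b` along the walk of `k` steps from `x`, omitting the value at `x`;
  -- it depends only on the end point of the walk.
  let E : Fin n → ℕ → A := fun x k => ∑ t ∈ range k, b (σ^[t + 1] x)
  have hE : ∀ x k l, k ≤ l → σ^[k] x = σ^[l] x → E x k = E x l := by
    intro x k l hkl hx
    obtain ⟨q, rfl⟩ := Nat.exists_eq_add_of_le hkl
    simp only [E]
    rw [sum_range_add, left_eq_add]
    have := sum_range_eq_zero (hb' (σ^[k + 1] x)) (q := q) (by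
      rw [← iterate_add_apply, iterate_succ_apply' (n := k), hx, ← iterate_succ_apply' (f := σ)]
      congr 1; omega)
    rw [← this]
    refine sum_congr rfl fun t _ => ?_
    rw [← iterate_add_apply]
    congr 2; omega
  have hE' : ∀ x k l, σ^[k] x = σ^[l] x → E x k = E x l := by
    intro x k l hx
    rcases le_total k l with hl | hl
    · exact hE x k l hl hx
    · exact (hE x l k hl hx.symm).symm
  refine ⟨fun j => E (r j) (k j), fun j => ?_⟩
  have hrj : r (σ j) = r j := by simp only [r, h.apply_eq]
  have h1 : σ^[k j + 1] (r j) = σ j := by rw [iterate_succ_apply', hk]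
  have h2 : σ^[k (σ j)] (r j) = σ^[k j + 1] (r j) := by rw [h1, ← hrj, hk]
  simp only [hrj]
  rw [hE' _ _ _ h2]
  simp only [E]
  rw [sum_range_succ, h1]

/-- If the cycles of `σ` and `σ'` with equal labels have equal lengths, some permutation
conjugates `σ` to `σ'` and preserves the labels: send `σ^a (r i)` to `σ'^a (r' i)` for base points
`r i`, `r' i` of the cycles labelled `i`. -/
theorem exists_intertwiner {n : ℕ} {I : Type*} [DecidableEq I]
    {σ σ' : Equiv.Perm (Fin n)} {p p' : Fin n → I} (h : IsCycleLabel σ p)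
    (h' : IsCycleLabel σ' p') (hcard : ∀ i, #{y | p y = i} = #{y | p' y = i}) :
    ∃ τ : Equiv.Perm (Fin n), (∀ j, τ (σ j) = σ' (τ j)) ∧ ∀ j, p' (τ j) = p j := by
  let r : I → Fin n := surjInv h.surj
  let r' : I → Fin n := surjInv h'.surj
  have hr : ∀ i, p (r i) = i := surjInv_eq h.surj
  have hr' : ∀ i, p' (r' i) = i := surjInv_eq h'.surj
  have hper : ∀ i, minimalPeriod σ (r i) = minimalPeriod σ' (r' i) := fun i => by
    rw [← h.card_fiber, ← h'.card_fiber, hr, hr', hcard]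
  have hk : ∀ j, ∃ k : ℕ, σ^[k] (r (p j)) = j := fun j => by
    obtain ⟨k, hk⟩ := ((h.iff_sameCycle _ _).1 (hr (p j))).exists_nat_pow_eq
    exact ⟨k, by rwa [← Equiv.Perm.coe_pow]⟩
  choose k hk using hk
  have hpos : ∀ i, 0 < minimalPeriod σ (r i) := fun i => by
    rw [← h.card_fiber, card_pos]
    exact ⟨r i, by simp⟩
  have htrans : ∀ i a b, σ^[a] (r i) = σ^[b] (r i) → σ'^[a] (r' i) = σ'^[b] (r' i) := by
    intro i a b hab
    rw [← iterate_mod_minimalPeriod_eq, ← iterate_mod_minimalPeriod_eq (n := b),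
      iterate_eq_iterate_iff_of_lt_minimalPeriod (Nat.mod_lt _ (hpos i)) (Nat.mod_lt _ (hpos i)),
      hper] at hab
    rw [← iterate_mod_minimalPeriod_eq, hab, iterate_mod_minimalPeriod_eq]
  have hp'it : ∀ i a, p' (σ'^[a] (r' i)) = i := by
    intro i a
    induction a with
    | zero => exact hr' i
    | succ a ih => rw [iterate_succ_apply', h'.apply_eq, ih]
  have hpit : ∀ i a, p (σ^[a] (r i)) = i := by
    intro i a
    induction a with
    | zero => exact hr i
    | succ a ih => rw [iterate_succ_apply', h.apply_eq, ih]
  let τ : Fin n → Fin n := fun j => σ'^[k j] (r' (p j))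
  have hτ : ∀ i a, τ (σ^[a] (r i)) = σ'^[a] (r' i) := by
    intro i a
    have := hk (σ^[a] (r i))
    simp only [τ]
    rw [hpit] at this ⊢
    exact htrans _ _ _ this
  have hsurj : Surjective τ := by
    intro y
    obtain ⟨a, ha⟩ := ((h'.iff_sameCycle _ _).1 (hr' (p' y))).exists_nat_pow_eq
    exact ⟨σ^[a] (r (p' y)), by rw [hτ, ← Equiv.Perm.coe_pow, ha]⟩
  refine ⟨Equiv.ofBijective τ (Finite.surjective_iff_bijective.1 hsurj), fun j => ?_, fun j => ?_⟩
  · simp only [Equiv.ofBijective_apply]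
    rw [← hk j, ← iterate_succ_apply' σ, hτ, hτ, iterate_succ_apply']
  · exact hp'it _ _

/-- After relabelling, the cycles of `σ` and `σ'` with equal labels have equal lengths and sums.
The permutation `τ` of `exists_intertwiner` conjugates `σ` to `σ'`, and the difference
`c' ∘ τ - c` sums to zero over each cycle of `σ`, so it is a coboundary of some `e`; then
`(e ∘ τ⁻¹, τ)` conjugates `(c, σ)` to `(c', σ')`. -/
theorem isConj_of_cycData_eq {m n : ℕ} {g g' : Wgp m n}
    (h : cycData m n g.left g.right = cycData m n g'.left g'.right) : IsConj g g' := by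
  obtain ⟨c, σ⟩ := g
  obtain ⟨c', σ'⟩ := g'
  obtain ⟨k, p, hp⟩ := exists_cycleLabel σ
  obtain ⟨k', q, hq⟩ := exists_cycleLabel σ'
  simp only at h
  rw [cycData_eq c hp, cycData_eq c' hq] at h
  obtain ⟨π, hπ⟩ := exists_equiv_of_map_univ_eq _ _ h
  have hp' : IsCycleLabel σ' (π.symm ∘ q) :=
    ⟨π.symm.surjective.comp hq.surj, fun x y => by simp [hq.iff_sameCycle]⟩
  have hd : ∀ i, labelData c' (π.symm ∘ q) i = labelData c p i := fun i => by
    rw [← hπ]; simp [labelData, Equiv.symm_apply_eq]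
  obtain ⟨τ, hτ, hpτ⟩ := exists_intertwiner hp hp' fun i => (congrArg Prod.fst (hd i)).symm
  obtain ⟨e, he⟩ := exists_coboundary hp
    (fun j => Multiplicative.toAdd (c' (τ j)) - Multiplicative.toAdd (c j)) (by
      intro i
      rw [sum_sub_distrib, sub_eq_zero]
      refine Eq.trans ?_ (congrArg Prod.snd (hd i))
      simp only [labelData, ← hpτ]
      exact sum_equiv τ (fun _ => by simp only [mem_filter, mem_univ, true_and, comp_apply])
        (fun _ _ => rfl))
  have hτσ : τ * σ = σ' * τ := Equiv.ext hτ
  refine isConj_iff.2 ⟨⟨fun x => Multiplicative.ofAdd (e (τ.symm x)), τ⟩, ?_⟩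
  rw [mul_inv_eq_iff_eq_mul]
  refine SemidirectProduct.ext ?_ hτσ
  change (fun x => Multiplicative.ofAdd (e (τ.symm x))) * (c ∘ τ.symm) =
    c' * ((fun x => Multiplicative.ofAdd (e (τ.symm x))) ∘ σ'.symm)
  funext x
  obtain ⟨j, rfl⟩ := (τ.surjective.comp σ.surjective) x
  apply Multiplicative.toAdd.injective
  simp only [Pi.mul_apply, comp_apply, toAdd_mul, toAdd_ofAdd, Equiv.symm_apply_apply, he]
  rw [hτ, Equiv.symm_apply_apply, Equiv.symm_apply_apply]
  abel

/-! ### Realizing cycle data and counting conjugacy classes -/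

/-- The multisets that occur as cycle data in `W_{m,n}`: all lengths are positive and they add
up to `n`. -/
def IsCycDatum (m n : ℕ) (D : Multiset (ℕ × ZMod m)) : Prop :=
  (∀ x ∈ D, 0 < x.1) ∧ (D.map Prod.fst).sum = n

theorem isCycDatum_cycData {m n : ℕ} (c : Fin n → Multiplicative (ZMod m))
    (σ : Equiv.Perm (Fin n)) : IsCycDatum m n (cycData m n c σ) := by
  obtain ⟨k, p, hp⟩ := exists_cycleLabel σ
  rw [cycData_eq c hp]
  constructor
  · intro x hx
    obtain ⟨i, -, rfl⟩ := Multiset.mem_map.1 hx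
    obtain ⟨x, rfl⟩ := hp.surj i
    change 0 < #{y | p y = p x}
    exact card_pos.2 ⟨x, by simp⟩
  · rw [Multiset.map_map]
    have := card_eq_sum_card_fiberwise (f := p) (s := univ) (t := univ)
      fun _ _ => mem_coe.2 (mem_univ _)
    rw [card_univ, Fintype.card_fin] at this
    exact this.symm

/-- Every family of admissible pairs is realized: on the disjoint union of the groups `ℤ/ℓℤ`, one for
each pair `(ℓ, a)` in the family, translation by `1` in every summand has the right cycles, and
the function equal to `a` at the origin of a summand and `0` elsewhere has the right sums. -/
theorem exists_cycData_eq_map {m n : ℕ} {D : Type*} [Fintype D] (f : D → ℕ × ZMod m)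
    [∀ i, NeZero (f i).1] (hsum : ∑ i, (f i).1 = n) :
    ∃ c σ, cycData m n c σ = (univ : Finset D).val.map f := by
  classical
  have hcard : Fintype.card (Σ i : D, ZMod (f i).1) = n := by
    rw [Fintype.card_sigma, ← hsum]
    simp only [ZMod.card]
  let e : (Σ i : D, ZMod (f i).1) ≃ Fin n := Fintype.equivFinOfCardEq hcard
  let ρ : Equiv.Perm (Σ i : D, ZMod (f i).1) := Equiv.sigmaCongrRight fun i => Equiv.addRight 1
  have hρ : ∀ (k : ℕ) i a, (ρ ^ k) ⟨i, a⟩ = ⟨i, a + k⟩ := by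
    intro k i a
    induction k with
    | zero => simp
    | succ k ih =>
      rw [pow_succ', Equiv.Perm.mul_apply, ih]
      simp [ρ, add_assoc]
  have hlabel : IsCycleLabel (e.permCongr ρ) (fun x => (e.symm x).1) := by
    refine ⟨fun i => ⟨e ⟨i, 0⟩, by simp⟩, fun x y => ?_⟩
    obtain ⟨⟨i, a⟩, rfl⟩ := e.surjective x
    obtain ⟨⟨j, b⟩, rfl⟩ := e.surjective y
    have hpow : ∀ k : ℕ, ((e.permCongr ρ) ^ k) (e ⟨i, a⟩) = e ⟨i, a + k⟩ := by
      intro k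
      rw [← hρ]
      induction k with
      | zero => rfl
      | succ k ih => rw [pow_succ', Equiv.Perm.mul_apply, ih, pow_succ', Equiv.Perm.mul_apply]; simp
    simp only [Equiv.symm_apply_apply]
    constructor
    · rintro rfl
      refine ⟨((b - a).val : ℕ), ?_⟩
      rw [zpow_natCast, hpow, ZMod.natCast_zmod_val, add_sub_cancel]
    · intro hs
      obtain ⟨k, hk⟩ := hs.exists_nat_pow_eq
      rw [hpow, e.injective.eq_iff] at hk
      exact congrArg Sigma.fst hk
  let c₀ : (Σ i : D, ZMod (f i).1) → ZMod m := fun s => if s.2 = 0 then (f s.1).2 else 0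
  refine ⟨fun x => Multiplicative.ofAdd (c₀ (e.symm x)), e.permCongr ρ, ?_⟩
  rw [cycData_eq _ hlabel]
  refine Multiset.map_congr rfl fun i _ => ?_
  have himg : (univ.filter fun x => (e.symm x).1 = i) =
      (univ : Finset (ZMod (f i).1)).image fun a => e ⟨i, a⟩ := by
    ext x
    obtain ⟨⟨j, b⟩, rfl⟩ := e.surjective x
    simp only [mem_filter, mem_univ, true_and, mem_image, e.injective.eq_iff,
      Equiv.symm_apply_apply]
    constructor
    · rintro rfl; exact ⟨b, rfl⟩
    · rintro ⟨a, ha⟩; exact (congrArg Sigma.fst ha).symm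
  have hinj : Injective fun a : ZMod (f i).1 => e ⟨i, a⟩ :=
    e.injective.comp sigma_mk_injective
  refine Prod.ext ?_ ?_
  · simp only [labelData]
    rw [himg, card_image_of_injective _ hinj, card_univ, ZMod.card]
  · simp only [labelData]
    rw [himg, sum_image hinj.injOn]
    have h0 : ∀ a, c₀ (e.symm (e ⟨i, a⟩)) = if a = 0 then (f i).2 else 0 := fun a => by
      rw [e.symm_apply_apply]
    simp only [toAdd_ofAdd, h0, sum_ite_eq', mem_univ, if_true]

theorem exists_cycData_eq {m n : ℕ} {D : Multiset (ℕ × ZMod m)} (hD : IsCycDatum m n D) :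
    ∃ c σ, cycData m n c σ = D := by
  have : ∀ i : D, NeZero (i.1 : ℕ × ZMod m).1 := fun i => ⟨(hD.1 i.1 Multiset.coe_mem).ne'⟩
  have hsum : ∑ i : D, (i.1 : ℕ × ZMod m).1 = n := by
    rw [← hD.2, ← Multiset.map_univ]
    rfl
  obtain ⟨c, σ, h⟩ := exists_cycData_eq_map (fun i : D => (i.1 : ℕ × ZMod m)) hsum
  exact ⟨c, σ, h.trans (Multiset.map_univ_coe D)⟩

theorem card_conjClasses (m n : ℕ) :
    Nat.card (ConjClasses (Wgp m n)) = Nat.card {D // IsCycDatum m n D} := by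
  refine Nat.card_eq_of_bijective
    (Quotient.lift (fun g : Wgp m n => (⟨cycData m n g.left g.right,
      isCycDatum_cycData _ _⟩ : {D // IsCycDatum m n D}))
      fun g g' h => Subtype.ext (cycData_eq_of_isConj h)) ⟨?_, ?_⟩
  · intro x y
    induction x using Quotient.inductionOn
    induction y using Quotient.inductionOn
    intro h
    exact Quotient.sound (isConj_of_cycData_eq (congrArg Subtype.val h))
  · rintro ⟨D, hD⟩
    obtain ⟨c, σ, rfl⟩ := exists_cycData_eq hD
    exact ⟨Quotient.mk _ ⟨c, σ⟩, rfl⟩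

/-- The multiset of all pairs (part, colour) of a multipartition, where the `i`-th partition has
colour `e i`. -/
def colouredParts {m : ℕ} (e : Fin m ≃ ZMod m) (f : Fin m → Σ d : ℕ, Nat.Partition d) :
    Multiset (ℕ × ZMod m) :=
  ∑ i, (f i).2.parts.map fun l => (l, e i)

/-- A multipartition is recovered from its coloured parts by sorting them by colour. -/
theorem filter_colouredParts {m : ℕ} (e : Fin m ≃ ZMod m)
    (f : Fin m → Σ d : ℕ, Nat.Partition d) (i : Fin m) :
    ((colouredParts e f).filter (·.2 = e i)).map Prod.fst = (f i).2.parts := by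
  classical
  have h1 : ∀ j, ((f j).2.parts.map fun l => (l, e j)).filter (·.2 = e i) =
      if j = i then ((f j).2.parts.map fun l => (l, e j)) else 0 := by
    intro j
    split_ifs with h
    · subst h
      exact Multiset.filter_eq_self.2 (by simp)
    · exact Multiset.filter_eq_nil.2 (by simp [h])
  have h2 : (colouredParts e f).filter (·.2 = e i) =
      ∑ j, ((f j).2.parts.map fun l => (l, e j)).filter (·.2 = e i) :=
    map_sum (⟨⟨Multiset.filter (·.2 = e i), Multiset.filter_zero _⟩, Multiset.filter_add _⟩ :
      Multiset (ℕ × ZMod m) →+ Multiset (ℕ × ZMod m)) _ _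
  rw [h2]
  simp only [h1, sum_ite_eq', mem_univ, if_true, Multiset.map_map, Multiset.map_id',
    comp_def]

/-- A partition of an unspecified integer is determined by its parts, their sum being the
integer. -/
theorem partition_sigma_ext {a b : Σ d : ℕ, Nat.Partition d} (h : a.2.parts = b.2.parts) :
    a = b := by
  obtain ⟨d, a⟩ := a
  obtain ⟨d', b⟩ := b
  simp only at h
  obtain rfl : d = d' := by rw [← a.parts_sum, h, b.parts_sum]
  rw [Nat.Partition.ext h]

theorem sum_filter_colour {m : ℕ} (e : Fin m ≃ ZMod m) (D : Multiset (ℕ × ZMod m)) :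
    ∑ i, D.filter (·.2 = e i) = D := by
  classical
  ext x
  rw [Multiset.count_sum']
  simp only [Multiset.count_filter]
  rw [sum_eq_single (e.symm x.2)]
  · simp
  · intro i _ hi
    rw [if_neg]
    rintro h
    exact hi (by rw [h, e.symm_apply_apply])
  · simp

theorem isCycDatum_colouredParts {m n : ℕ} (e : Fin m ≃ ZMod m)
    (f : Fin m → Σ d : ℕ, Nat.Partition d) (hf : ∑ i, (f i).1 = n) :
    IsCycDatum m n (colouredParts e f) := by
  constructor
  · intro x hx
    obtain ⟨i, -, hi⟩ := Multiset.mem_sum.1 hx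
    obtain ⟨l, hl, rfl⟩ := Multiset.mem_map.1 hi
    exact (f i).2.parts_pos hl
  · rw [← hf, colouredParts, ← Multiset.coe_mapAddMonoidHom, map_sum, Multiset.sum_sum]
    refine sum_congr rfl fun i _ => ?_
    simp [(f i).2.parts_sum]

theorem card_isCycDatum {m : ℕ} (n : ℕ) (hm : 0 < m) :
    Nat.card {f : Fin m → Σ d : ℕ, Nat.Partition d // (∑ i, (f i).1) = n} =
      Nat.card {D // IsCycDatum m n D} := by
  have : NeZero m := ⟨hm.ne'⟩
  let e : Fin m ≃ ZMod m := (ZMod.finEquiv m).toEquiv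
  refine Nat.card_eq_of_bijective
    (fun f => ⟨colouredParts e f.1, isCycDatum_colouredParts e f.1 f.2⟩) ⟨?_, ?_⟩
  · rintro ⟨f, hf⟩ ⟨f', hf'⟩ h
    refine Subtype.ext (funext fun i => partition_sigma_ext ?_)
    have h' : colouredParts e f = colouredParts e f' := congrArg Subtype.val h
    rw [← filter_colouredParts e, h', filter_colouredParts]
  · rintro ⟨D, hpos, hsum⟩
    let f : Fin m → Σ d : ℕ, Nat.Partition d := fun i =>
      ⟨((D.filter (·.2 = e i)).map Prod.fst).sum,
        { parts := (D.filter (·.2 = e i)).map Prod.fst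
          parts_pos := by
            intro l hl
            obtain ⟨x, hx, rfl⟩ := Multiset.mem_map.1 hl
            exact hpos x (Multiset.mem_of_mem_filter hx)
          parts_sum := rfl }⟩
    have hfD : colouredParts e f = D := by
      conv_rhs => rw [← sum_filter_colour e D]
      refine sum_congr rfl fun i _ => ?_
      simp only [f, Multiset.map_map]
      conv_rhs => rw [← Multiset.map_id (D.filter (·.2 = e i))]
      refine Multiset.map_congr rfl fun x hx => ?_
      exact Prod.ext rfl (Multiset.mem_filter.1 hx).2.symm
    refine ⟨⟨f, ?_⟩, Subtype.ext hfD⟩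
    have := (isCycDatum_colouredParts e f rfl).2
    rw [← this, hfD, hsum]

/-- Two elements of `W_{m,n} = (ℤ/mℤ)^n ⋊ S_n` are conjugate iff their cycle data
coincide; consequently the number of conjugacy classes of `W_{m,n}` equals the number of
`m`-multipartitions of `n`. -/
theorem stmt15 (m n : ℕ) (hm : 0 < m) (hn : 0 < n) :
    (∀ g g' : Wgp m n,
        IsConj g g' ↔ cycData m n g.left g.right = cycData m n g'.left g'.right) ∧
    Nat.card (ConjClasses (Wgp m n)) =
      Nat.card {f : Fin m → Σ d : ℕ, Nat.Partition d // (∑ i, (f i).1) = n} := by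
  exact ⟨fun _ _ => ⟨cycData_eq_of_isConj, isConj_of_cycData_eq⟩,
    (card_conjClasses m n).trans (card_isCycDatum n hm).symm⟩
end
end
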